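/- arXiv:2303.03567 — 4 statements merged into one kernel-verified Lean document; each statement's English description precedes it below -/
import Mathlib

section
/- For every d ≥ 2 and every s < d there exist a set A ⊆ ℝ^d, a sequence R_n → ∞, and a sequence of distances d_j → ∞ such that lim_{n → ∞} sup_{x ∈ ℝ^d} H^s_∞(A_{R_n}(x)) = 1, and yet d_j ∉ Δ(A) for every j; that is, A avoids infinitely many large distances despite its normalized truncations attaining full s-dimensional dyadic Hausdorff content along the sequence R_n. -/
open MeasureTheory Set Metric Filter
open scoped ENNReal NNReal Topology

noncomputable section

abbrev Euc (d : ℕ) : Type := EuclideanSpace ℝ (Fin d)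

/-- The closed unit cube `[0,1]^d`. -/
def unitCube (d : ℕ) : Set (Euc d) := {x | ∀ i, x i ∈ Icc (0:ℝ) 1}

/-- The distance set `Δ(E,F) = {|x-y| : x ∈ E, y ∈ F}`. -/
def distSet {d : ℕ} (E F : Set (Euc d)) : Set ℝ :=
  {t | ∃ x ∈ E, ∃ y ∈ F, dist x y = t}

/-- `Q` is a dyadic cube of side length `l`, i.e. `Q = 2^{-k}(m + [0,1]^d)`. -/
def IsDyadicCube {d : ℕ} (Q : Set (Euc d)) (l : ℝ) : Prop :=
  ∃ (k : ℤ) (m : Fin d → ℤ), l = (2:ℝ) ^ (-k) ∧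
    Q = {x | ∀ i, (m i : ℝ) * (2:ℝ) ^ (-k) ≤ x i ∧ x i ≤ ((m i : ℝ) + 1) * (2:ℝ) ^ (-k)}

/-- The `s`-dimensional dyadic Hausdorff content: the infimum of `∑ ℓ(Q_i)^s` over
countable covers of `E` by dyadic cubes. -/
def dyadicContent {d : ℕ} (s : ℝ) (E : Set (Euc d)) : ℝ≥0∞ :=
  ⨅ (Q : ℕ → Set (Euc d)) (l : ℕ → ℝ) (_ : ∀ i, IsDyadicCube (Q i) (l i))
    (_ : E ⊆ ⋃ i, Q i), ∑' i, ENNReal.ofReal (l i ^ s)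

/-- The normalized truncation `A_R(x) = T_{x,R}[A ∩ (x + [0,R]^d)]`,
where `T_{x,R}(y) = (y - x)/R`. -/
def normTrunc {d : ℕ} (A : Set (Euc d)) (R : ℝ) (x : Euc d) : Set (Euc d) :=
  (fun y => R⁻¹ • (y - x)) '' (A ∩ {y : Euc d | ∀ i, y i - x i ∈ Icc (0:ℝ) R})

def HH (K a : ℕ) : Set ℝ := {z | Int.fract ((2:ℝ)^K * z) < (2:ℝ)^(-(a:ℤ))}

lemma HH_meas (K a : ℕ) : MeasurableSet (HH K a) := by
  unfold HH
  apply measurableSet_lt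
  · exact measurable_fract.comp (measurable_const.mul measurable_id)
  · exact measurable_const

lemma HH_cell (K a : ℕ) (m : ℤ) :
    HH K a ∩ Ico ((m:ℝ) * (2:ℝ)^(-(K:ℤ))) (((m:ℝ)+1) * (2:ℝ)^(-(K:ℤ))) =
      Ico ((m:ℝ) * (2:ℝ)^(-(K:ℤ))) (((m:ℝ)+ (2:ℝ)^(-(a:ℤ))) * (2:ℝ)^(-(K:ℤ))) := by
  have hp : (0:ℝ) < (2:ℝ)^K := by positivity
  have ha : (2:ℝ)^(-(a:ℤ)) ≤ 1 := by
    apply zpow_le_one_of_nonpos₀ (by norm_num) (by simp)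
  ext z
  simp only [HH, mem_inter_iff, mem_ofPred_eq, mem_Ico, zpow_neg (2:ℝ) (K:ℤ), zpow_natCast,
    ← div_eq_mul_inv]
  rw [div_le_iff₀ hp, lt_div_iff₀ hp, lt_div_iff₀ hp, mul_comm z]
  constructor
  · rintro ⟨h1, h2, h3⟩
    have : ⌊(2:ℝ)^K * z⌋ = m := by rw [Int.floor_eq_iff]; exact ⟨h2, h3⟩
    have h4 := Int.self_sub_floor ((2:ℝ)^K * z)
    rw [this] at h4
    exact ⟨h2, by linarith⟩
  · rintro ⟨h2, h3⟩
    have : ⌊(2:ℝ)^K * z⌋ = m := by rw [Int.floor_eq_iff]; exact ⟨h2, by linarith⟩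
    have h4 := Int.self_sub_floor ((2:ℝ)^K * z)
    rw [this] at h4
    exact ⟨by linarith, h2, by linarith⟩

lemma HH_vol (K a : ℕ) (m : ℤ) (N : ℕ) :
    volume (HH K a ∩ Ico ((m:ℝ) * (2:ℝ)^(-(K:ℤ))) (((m:ℝ)+N) * (2:ℝ)^(-(K:ℤ)))) =
      ENNReal.ofReal (N * ((2:ℝ)^(-(a:ℤ)) * (2:ℝ)^(-(K:ℤ)))) := by
  have hp : (0:ℝ) < (2:ℝ)^(-(K:ℤ)) := by positivity
  induction N with
  | zero => simp
  | succ N ih =>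
    have e1 : Ico ((m:ℝ) * (2:ℝ)^(-(K:ℤ))) (((m:ℝ)+((N+1:ℕ):ℝ)) * (2:ℝ)^(-(K:ℤ))) =
      Ico ((m:ℝ) * (2:ℝ)^(-(K:ℤ))) (((m:ℝ)+N) * (2:ℝ)^(-(K:ℤ))) ∪
      Ico (((m+N:ℤ):ℝ) * (2:ℝ)^(-(K:ℤ))) ((((m+N:ℤ):ℝ)+1) * (2:ℝ)^(-(K:ℤ))) := by
      push_cast
      rw [Ico_union_Ico_eq_Ico]
      · ring_nf
      · apply mul_le_mul_of_nonneg_right _ hp.le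
        have : (0:ℝ) ≤ N := by positivity
        linarith
      · apply mul_le_mul_of_nonneg_right _ hp.le
        linarith
    rw [e1, inter_union_distrib_left, measure_union, ih, HH_cell, Real.volume_Ico,
      ← ENNReal.ofReal_add]
    · congr 1; push_cast; ring
    · positivity
    · rw [← sub_mul]; simp only [add_sub_cancel_left]; positivity
    · apply Disjoint.mono inter_subset_right inter_subset_right
      push_cast
      exact Ico_disjoint_Ico_same
    · exact (HH_meas K a).inter measurableSet_Ico

def GG (K a : ℕ) : Set ℝ := HH K a ∩ Ico 0 1

lemma GG_vol (K a : ℕ) : volume (GG K a) = ENNReal.ofReal ((2:ℝ)^(-(a:ℤ))) := by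
  have h := HH_vol K a 0 (2^K)
  have e : (2:ℝ)^K * (2:ℝ)^(-(K:ℤ)) = 1 := by
    rw [zpow_neg, zpow_natCast]; field_simp
  simp only [Int.cast_zero, zero_mul, zero_add] at h
  push_cast at h
  rw [e] at h
  unfold GG
  rw [h]
  congr 1
  rw [mul_left_comm, e, mul_one]

lemma one_dim (K a : ℕ) (t : ℝ) (ht0 : 0 ≤ t) (ht1 : t ≤ 1) (hK : ((K:ℝ)+a) * t ≤ K)
    (k m : ℤ) :
    volume (GG K a ∩ Icc ((m:ℝ) * (2:ℝ)^(-k)) (((m:ℝ)+1) * (2:ℝ)^(-k))) ≤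
      ENNReal.ofReal ((2:ℝ)^(-(a:ℤ)) * (2:ℝ)^(-((k:ℝ)*t))) := by
  have hz : ∀ j : ℤ, (2:ℝ)^j = (2:ℝ)^(j:ℝ) := fun j => (Real.rpow_intCast 2 j).symm
  rcases le_total k 0 with hk | hk
  · refine (measure_mono inter_subset_left).trans ?_
    rw [GG_vol]
    apply ENNReal.ofReal_le_ofReal
    apply le_mul_of_one_le_right (by positivity)
    apply Real.one_le_rpow (by norm_num)
    have : (k:ℝ) ≤ 0 := by exact_mod_cast hk
    nlinarith
  have hk' : (0:ℝ) ≤ k := by exact_mod_cast hk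
  have key : volume (GG K a ∩ Icc ((m:ℝ) * (2:ℝ)^(-k)) (((m:ℝ)+1) * (2:ℝ)^(-k))) ≤
      volume (HH K a ∩ Ico ((m:ℝ) * (2:ℝ)^(-k)) (((m:ℝ)+1) * (2:ℝ)^(-k))) := by
    have : volume (HH K a ∩ Ico ((m:ℝ) * (2:ℝ)^(-k)) (((m:ℝ)+1) * (2:ℝ)^(-k))) =
      volume (HH K a ∩ Icc ((m:ℝ) * (2:ℝ)^(-k)) (((m:ℝ)+1) * (2:ℝ)^(-k))) :=
      measure_congr ((ae_eq_refl _).inter Ico_ae_eq_Icc)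
    rw [this]
    exact measure_mono (inter_subset_inter_left _ inter_subset_left)
  refine key.trans ?_
  rcases le_total k K with hkK | hkK
  · obtain ⟨c, hc⟩ := Int.eq_ofNat_of_zero_le (sub_nonneg.2 hkK)
    have e : (2:ℝ)^(-k) = (2:ℝ)^c * (2:ℝ)^(-(K:ℤ)) := by
      rw [← zpow_natCast, ← zpow_add₀ (by norm_num)]; congr 1; omega
    have h := HH_vol K a (m * 2^c) (2^c)
    push_cast at h
    rw [e]
    have e2 : (m:ℝ) * ((2:ℝ)^c * (2:ℝ)^(-(K:ℤ))) = (m:ℝ) * 2^c * (2:ℝ)^(-(K:ℤ)) := by ring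
    have e3 : ((m:ℝ)+1) * ((2:ℝ)^c * (2:ℝ)^(-(K:ℤ))) = ((m:ℝ) * 2^c + 2^c) * (2:ℝ)^(-(K:ℤ)) := by
      ring
    rw [e2, e3, h]
    apply ENNReal.ofReal_le_ofReal
    rw [mul_left_comm, ← e]
    apply mul_le_mul_of_nonneg_left _ (by positivity)
    rw [hz]
    apply Real.rpow_le_rpow_of_exponent_le (by norm_num)
    push_cast
    nlinarith
  · obtain ⟨c, hc⟩ := Int.eq_ofNat_of_zero_le (sub_nonneg.2 hkK)
    have hkK' : (K:ℝ) ≤ k := by exact_mod_cast hkK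
    rcases le_total (k:ℝ) (K + a) with hka | hka
    · have hsub : Ico ((m:ℝ) * (2:ℝ)^(-k)) (((m:ℝ)+1) * (2:ℝ)^(-k)) ⊆
        Ico (((m / 2^c : ℤ):ℝ) * (2:ℝ)^(-(K:ℤ))) ((((m / 2^c : ℤ):ℝ)+(1:ℕ)) * (2:ℝ)^(-(K:ℤ))) := by
        have e : (2:ℝ)^(-(K:ℤ)) = (2:ℝ)^c * (2:ℝ)^(-k) := by
          rw [← zpow_natCast, ← zpow_add₀ (by norm_num)]; congr 1; omega
        rw [e, ← mul_assoc, ← mul_assoc]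
        have h2 : (0:ℤ) < 2^c := by positivity
        have i1 : (m / 2^c) * 2^c ≤ m := Int.ediv_mul_le _ h2.ne'
        have i2 : m + 1 ≤ (m / 2^c + 1) * 2^c := by
          have := Int.lt_ediv_add_one_mul_self m h2
          omega
        apply Ico_subset_Ico
        · apply mul_le_mul_of_nonneg_right _ (by positivity)
          exact_mod_cast i1
        · apply mul_le_mul_of_nonneg_right _ (by positivity)
          exact_mod_cast i2
      refine (measure_mono (inter_subset_inter_right _ hsub)).trans ?_
      rw [HH_vol]
      apply ENNReal.ofReal_le_ofReal
      rw [Nat.cast_one, one_mul]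
      apply mul_le_mul_of_nonneg_left _ (by positivity)
      rw [hz]
      apply Real.rpow_le_rpow_of_exponent_le (by norm_num)
      push_cast
      nlinarith
    · refine (measure_mono inter_subset_right).trans ?_
      rw [Real.volume_Ico]
      apply ENNReal.ofReal_le_ofReal
      rw [← sub_mul, add_sub_cancel_left, one_mul, hz, hz, ← Real.rpow_add (by norm_num)]
      apply Real.rpow_le_rpow_of_exponent_le (by norm_num)
      push_cast
      nlinarith

lemma content_ge (d : ℕ) (hd : 2 ≤ d) (s : ℝ) (hs0 : 0 < s) (hsd : s < d) (K a : ℕ)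
    (hK : ((K:ℝ)+a) * s ≤ K * d) (E : Set (Euc d)) (hE : {z : Euc d | ∀ i, z i ∈ GG K a} ⊆ E) :
    1 ≤ dyadicContent s E := by
  have hd0 : (0:ℝ) < d := by positivity
  unfold dyadicContent
  refine le_iInf fun Q => le_iInf fun l => le_iInf fun hQ => le_iInf fun hc => ?_
  choose k m hl hQm using hQ
  set c : ℝ≥0∞ := ENNReal.ofReal ((2:ℝ)^(-(a:ℤ))) with hcdef
  have c0 : c ≠ 0 := by
    rw [hcdef]; simp only [ne_eq, ENNReal.ofReal_eq_zero, not_le]; positivity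
  have ctop : c ≠ ⊤ := ENNReal.ofReal_ne_top
  let E' : Set (Fin d → ℝ) := Set.pi univ fun _ => GG K a
  let P : ℕ → Set (Fin d → ℝ) := fun n => Set.pi univ fun i =>
    GG K a ∩ Icc ((m n i:ℝ) * (2:ℝ)^(-(k n))) (((m n i:ℝ)+1) * (2:ℝ)^(-(k n)))
  have hcov : E' ⊆ ⋃ n, P n := by
    intro z hz
    have hz' : ∀ i, z i ∈ GG K a := fun i => hz i (mem_univ i)
    have := hc (hE (a := WithLp.toLp 2 z) hz')
    rw [mem_iUnion] at this ⊢
    obtain ⟨n, hn⟩ := this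
    rw [hQm n] at hn
    exact ⟨n, fun i _ => ⟨hz' i, hn i⟩⟩
  have hvE : volume E' = c ^ d := by
    rw [volume_pi_pi]; simp [GG_vol, hcdef]
  have hvP : ∀ n, volume (P n) ≤ c ^ d * ENNReal.ofReal (l n ^ s) := by
    intro n
    rw [volume_pi_pi]
    calc _ ≤ ∏ i : Fin d, ENNReal.ofReal ((2:ℝ)^(-(a:ℤ)) * (2:ℝ)^(-((k n:ℝ)*(s/d)))) := by
          apply Finset.prod_le_prod' 
          intro i _
          apply one_dim K a (s/d) (by positivity) (by rw [div_le_one hd0]; exact hsd.le)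
          rw [← mul_div_assoc, div_le_iff₀ hd0]
          exact hK
      _ = _ := by
          rw [Finset.prod_const, Finset.card_univ, Fintype.card_fin,
            ENNReal.ofReal_mul (by positivity), mul_pow]
          congr 1
          rw [← ENNReal.ofReal_pow (by positivity), hl n, ← Real.rpow_natCast, ← Real.rpow_mul (by norm_num),
            ← Real.rpow_intCast, ← Real.rpow_mul (by norm_num)]
          congr 2
          push_cast
          field_simp
  have : c ^ d * 1 ≤ c ^ d * ∑' n, ENNReal.ofReal (l n ^ s) := by
    rw [mul_one, ← ENNReal.tsum_mul_left, ← hvE]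
    refine (measure_mono hcov).trans ((measure_iUnion_le _).trans ?_)
    rw [hvE]
    exact ENNReal.tsum_le_tsum hvP
  exact (ENNReal.mul_le_mul_iff_right (pow_ne_zero _ c0) (ENNReal.pow_ne_top ctop)).1 this

lemma content_le (d : ℕ) (s : ℝ) (hs0 : 0 < s) (E : Set (Euc d)) (hE : E ⊆ unitCube d) :
    dyadicContent s E ≤ 1 := by
  apply ENNReal.le_of_forall_pos_le_add
  intro ε hε _
  obtain ⟨δ, hδ, hδs⟩ := ENNReal.exists_pos_sum_of_countable (ε := (ε:ℝ≥0∞))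
    (by exact_mod_cast hε.ne') ℕ
  have hk : ∀ n, ∃ k : ℕ, ((2:ℝ)^(-(k:ℤ)))^s ≤ δ n := by
    intro n
    have h2 : ((2:ℝ)^(-s)) < 1 := Real.rpow_lt_one_of_one_lt_of_neg (by norm_num) (by linarith)
    obtain ⟨k, hk⟩ := exists_pow_lt_of_lt_one (show (0:ℝ) < δ n from hδ n) h2
    refine ⟨k, le_trans (le_of_eq ?_) hk.le⟩
    rw [← Real.rpow_intCast, ← Real.rpow_mul (by norm_num), ← Real.rpow_natCast,
      ← Real.rpow_mul (by norm_num)]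
    congr 1; push_cast; ring
  choose k hk using hk
  let kk : ℕ → ℤ := fun n => Nat.casesOn n 0 fun j => (k j : ℤ)
  let l : ℕ → ℝ := fun n => (2:ℝ)^(-(kk n))
  let Q : ℕ → Set (Euc d) := fun n =>
    {x | ∀ i, (((0:ℤ)) : ℝ) * (2:ℝ) ^ (-(kk n)) ≤ x i ∧ x i ≤ (((0:ℤ) : ℝ) + 1) * (2:ℝ) ^ (-(kk n))}
  have hQ : ∀ n, IsDyadicCube (Q n) (l n) := fun n => ⟨kk n, fun _ => 0, rfl, rfl⟩
  have hcov : E ⊆ ⋃ n, Q n := by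
    intro x hx
    rw [mem_iUnion]
    refine ⟨0, fun i => ?_⟩
    have := hE hx i
    simpa [kk] using this
  unfold dyadicContent
  refine le_trans (iInf_le_of_le Q (iInf_le_of_le l (iInf_le_of_le hQ (iInf_le _ hcov)))) ?_
  rw [tsum_eq_zero_add' ENNReal.summable]
  apply add_le_add
  · simp [l, kk]
  · refine le_trans (ENNReal.tsum_le_tsum fun n => ?_) hδs.le
    show ENNReal.ofReal (((2:ℝ)^(-(k n : ℤ)))^s) ≤ _
    rw [← ENNReal.ofReal_coe_nnreal]
    exact ENNReal.ofReal_le_ofReal (hk n)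

lemma normTrunc_sub {d : ℕ} (A : Set (Euc d)) (R : ℝ) (hR : 0 < R) (x : Euc d) :
    normTrunc A R x ⊆ unitCube d := by
  rintro _ ⟨y, ⟨_, hy⟩, rfl⟩ i
  obtain ⟨h1, h2⟩ := hy i
  simp only [PiLp.smul_apply, PiLp.sub_apply, smul_eq_mul]
  rw [inv_mul_eq_div]
  exact ⟨by positivity, (div_le_one hR).2 h2⟩

lemma params (d : ℕ) (s : ℝ) (hsd : s < d) (D : ℕ) :
    ∃ K a : ℕ, D ≤ K ∧ ((K:ℝ)+a) * s ≤ K * d ∧ 2 * d * (2 * D + 3) < 2 ^ a := by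
  obtain ⟨N, hN⟩ := exists_nat_ge (((2 * d * (2 * D + 3) : ℕ):ℝ) * s / (d - s))
  refine ⟨max D N, 2 * d * (2 * D + 3), le_max_left _ _, ?_, Nat.lt_two_pow_self⟩
  have h : (0:ℝ) < d - s := by linarith
  have h2 : (N:ℝ) ≤ (max D N : ℕ) := by exact_mod_cast le_max_right _ _
  have h3 := hN.trans h2
  rw [div_le_iff₀ h] at h3
  nlinarith

/-- Block at offset `X`. -/
def Blk (d K a : ℕ) (X : ℝ) : Set (Euc d) :=
  {p | ∀ i, p i - X ∈ Ico (0:ℝ) (2^K) ∧ Int.fract (p i - X) < (2:ℝ)^(-(a:ℤ))}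

lemma blk_content (d : ℕ) (hd : 2 ≤ d) (s : ℝ) (hs0 : 0 < s) (hsd : s < d) (K a : ℕ)
    (hK : ((K:ℝ)+a) * s ≤ K * d) (X : ℝ) (A : Set (Euc d)) (hA : Blk d K a X ⊆ A) :
    1 ≤ dyadicContent s (normTrunc A ((2:ℝ)^K) (WithLp.toLp 2 fun _ => X)) := by
  apply content_ge d hd s hs0 hsd K a hK
  intro z hz
  have hp : (0:ℝ) < 2^K := by positivity
  refine ⟨WithLp.toLp 2 (fun i => X + 2^K * z i), ⟨hA ?_, ?_⟩, ?_⟩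
  · intro i
    obtain ⟨h1, h2, h3⟩ := hz i
    simp only [add_sub_cancel_left]
    refine ⟨⟨by positivity, by nlinarith⟩, h1⟩
  · intro i
    obtain ⟨h1, h2, h3⟩ := hz i
    simp only [add_sub_cancel_left]
    exact ⟨by positivity, by nlinarith⟩
  · ext i
    simp

lemma blk_avoid (d : ℕ) (hd : 2 ≤ d) (K a D : ℕ) (hD : 2 * d * (2 * D + 3) < 2 ^ a) (X : ℝ) (j : ℕ) (hj : j ≤ D)
    (p q : Euc d) (hp : p ∈ Blk d K a X) (hq : q ∈ Blk d K a X)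
    (h : dist p q = √((j:ℝ)^2 + 1/2)) : False := by
  set η : ℝ := (2:ℝ)^(-(a:ℤ)) with hη
  have hη0 : 0 < η := by positivity
  have hη1 : η ≤ 1 := by
    apply zpow_le_one_of_nonpos₀ (by norm_num) (by simp)
  have hηD : η * (2 * d * (2 * D + 3)) < 1 := by
    rw [hη, zpow_neg, zpow_natCast, inv_mul_eq_div, div_lt_one (by positivity)]
    exact_mod_cast hD
  have hsum : ∑ i, (p i - q i)^2 = (j:ℝ)^2 + 1/2 := by
    rw [EuclideanSpace.dist_eq] at h
    have h' := congrArg (fun x => x^2) h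
    simp only [Real.dist_eq, sq_abs] at h'
    rw [Real.sq_sqrt (by positivity), Real.sq_sqrt (by positivity)] at h'
    exact h'
  let v : Fin d → ℤ := fun i => ⌊p i - X⌋ - ⌊q i - X⌋
  have hb : ∀ i, |(p i - q i)^2 - (v i:ℝ)^2| ≤ η * (2 * D + 3) := by
    intro i
    have e1 := Int.self_sub_floor (p i - X)
    have e2 := Int.self_sub_floor (q i - X)
    have f1 := (hp i).2
    have f2 := (hq i).2
    have g1 := Int.fract_nonneg (p i - X)
    have g2 := Int.fract_nonneg (q i - X)
    have hv : (v i:ℝ) = ⌊p i - X⌋ - ⌊q i - X⌋ := by simp [v]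
    have hu : |p i - q i| ≤ D + 1 := by
      apply abs_le_of_sq_le_sq _ (by positivity)
      have h1 : (p i - q i)^2 ≤ ∑ i, (p i - q i)^2 :=
        Finset.single_le_sum (f := fun i => (p i - q i)^2) (fun i _ => sq_nonneg _) (Finset.mem_univ i)
      have h2 : (j:ℝ) ≤ D := by exact_mod_cast hj
      have h3 : (0:ℝ) ≤ j := by positivity
      nlinarith
    have hw : |(p i - q i) - v i| ≤ η := by
      rw [abs_le]; constructor <;> linarith
    have : (p i - q i)^2 - (v i:ℝ)^2 = ((p i - q i) - v i) * (2 * (p i - q i) - ((p i - q i) - v i)) := by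
      ring
    rw [this, abs_mul]
    apply mul_le_mul hw _ (abs_nonneg _) hη0.le
    rw [abs_le] at *
    constructor <;> linarith [hu.1, hu.2, hw.1, hw.2]
  have hs : |∑ i, ((p i - q i)^2 - (v i:ℝ)^2)| ≤ d * (η * (2 * D + 3)) := by
    refine (Finset.abs_sum_le_sum_abs _ _).trans ?_
    refine (Finset.sum_le_sum fun i _ => hb i).trans ?_
    simp
  rw [Finset.sum_sub_distrib, hsum] at hs
  have hs2 : |((j:ℝ)^2 + 1/2 - ∑ i, (v i:ℝ)^2)| < 1/2 := by
    refine hs.trans_lt ?_; nlinarith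
  rw [abs_lt] at hs2
  have h1 : (((j:ℤ)^2 - ∑ i, (v i)^2 : ℤ):ℝ) < 0 := by push_cast; linarith [hs2.2]
  have h2 : (-1:ℝ) < (((j:ℤ)^2 - ∑ i, (v i)^2 : ℤ):ℝ) := by push_cast; linarith [hs2.1]
  have h1' : ((j:ℤ)^2 - ∑ i, (v i)^2 : ℤ) < 0 := by exact_mod_cast h1
  have h2' : -1 < ((j:ℤ)^2 - ∑ i, (v i)^2 : ℤ) := by exact_mod_cast h2
  omega

lemma dist_le_of_coord (d : ℕ) (p q : Euc d) (M : ℝ) (hM : 0 ≤ M) (h : ∀ i, |p i - q i| ≤ M) :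
    dist p q ≤ d * M := by
  rw [EuclideanSpace.dist_eq]
  apply Real.sqrt_le_iff.2 ⟨by positivity, ?_⟩
  calc _ ≤ ∑ i : Fin d, M^2 := by
        apply Finset.sum_le_sum
        intro i _
        rw [Real.dist_eq]
        exact pow_le_pow_left₀ (abs_nonneg _) (h i) 2
    _ = d * M^2 := by simp
    _ ≤ _ := by
        rw [mul_pow]
        apply mul_le_mul_of_nonneg_right _ (by positivity)
        exact_mod_cast Nat.le_self_pow (by norm_num) d

/-- Lemma 2.4: for every `d ≥ 2` and `s ∈ (0, d)` there exist a set `A ⊆ ℝ^d`, a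
rapidly growing sequence `R_n → ∞` with `lim_n sup_x H^s_∞(A_{R_n}(x)) = 1`, and a
sequence of distances `d_j → ∞` entirely avoided by `Δ(A)`. -/
theorem statement14 (d : ℕ) (hd : 2 ≤ d) (s : ℝ) (hs0 : 0 < s) (hsd : s < d) :
    ∃ (A : Set (Euc d)) (R : ℕ → ℝ) (dj : ℕ → ℝ),
      Tendsto R atTop atTop ∧ Tendsto dj atTop atTop ∧
      Tendsto (fun n => ⨆ x : Euc d, dyadicContent s (normTrunc A (R n) x))
        atTop (nhds 1) ∧
      ∀ j, dj j ∉ distSet A A := by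
  choose Kf af hKD hKs haD using params d s hsd
  obtain ⟨D, hDs⟩ : ∃ D : ℕ → ℕ, ∀ n, D (n+1) = d * (2 * D n + 1 + 2 ^ Kf (D n)) :=
    ⟨fun n => Nat.rec 0 (fun _ D => d * (2 * D + 1 + 2 ^ Kf D)) n, fun n => rfl⟩
  have hd1 : 1 ≤ d := by omega
  have hDs' : ∀ n, 2 * D n + 1 + 2 ^ Kf (D n) ≤ D (n+1) := fun n => by
    rw [hDs]; exact Nat.le_mul_of_pos_left _ hd1
  have hDlt : StrictMono D := strictMono_nat_of_lt_succ fun n => by have h1 := hDs' n; have h2 := Nat.zero_le (2 ^ Kf (D n)); exact lt_of_lt_of_le (by linarith) h1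
  have hDn : ∀ n, n ≤ D n := hDlt.id_le
  let B : ℕ → Set (Euc d) := fun n => Blk d (Kf (D n)) (af (D n)) ((2 * D n + 1 : ℕ):ℝ)
  -- coordinates
  have hlo : ∀ n, ∀ p ∈ B n, ∀ i, ((2 * D n + 1 : ℕ):ℝ) ≤ p i := fun n p hp i => by
    linarith [(hp i).1.1]
  have hhi : ∀ n j : ℕ, n < j → ∀ p : Euc d, p ∈ B n → ∀ i : Fin d, (d:ℝ) * p i ≤ (Nat.cast (D j) : ℝ) := by
    intro n j hn p hp i
    have h1 : D (n+1) ≤ D j := hDlt.monotone hn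
    rw [hDs] at h1
    have h2 : (d:ℝ) * (((2 * D n + 1 : ℕ):ℝ) + 2^Kf (D n)) ≤ D j := by exact_mod_cast h1
    refine le_trans (mul_le_mul_of_nonneg_left (?_ : p i ≤ ((2 * D n + 1 : ℕ):ℝ) + 2^Kf (D n)) (by positivity)) h2
    linarith [(hp i).1.2]
  have hdR : (1:ℝ) ≤ d := by exact_mod_cast hd1
  have main : ∀ (j a b : ℕ) (p q : Euc d), a ≤ b → p ∈ B a → q ∈ B b → dist p q = √((D j:ℝ)^2 + 1/2) → False := by
    intro j a b p q hab hp hq h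
    have hl1 : (D j:ℝ) < √((D j:ℝ)^2 + 1/2) := by
      apply Real.lt_sqrt_of_sq_lt; linarith
    have hl2 : √((D j:ℝ)^2 + 1/2) < D j + 1 := by
      rw [Real.sqrt_lt' (by positivity)]
      have : (0:ℝ) ≤ D j := by positivity
      nlinarith
    rcases lt_or_ge b j with hb | hb
    · have : dist p q ≤ d * ((D j:ℝ) / d) := by
        apply dist_le_of_coord _ _ _ _ (by positivity)
        intro i
        have h1 := hhi a j (by omega) p hp i
        have h2 := hhi b j hb q hq i
        have h3 := hlo a p hp i
        have h4 := hlo b q hq i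
        have h5 : p i ≤ D j / d := by rw [le_div_iff₀ (by positivity)]; linarith
        have h6 : q i ≤ D j / d := by rw [le_div_iff₀ (by positivity)]; linarith
        have h7 : (0:ℝ) ≤ ((2 * D a + 1 : ℕ):ℝ) := by positivity
        have h8 : (0:ℝ) ≤ ((2 * D b + 1 : ℕ):ℝ) := by positivity
        rw [abs_le]; constructor <;> linarith
      rw [mul_div_cancel₀ _ (by positivity)] at this
      linarith
    · have hDb : D j ≤ D b := hDlt.monotone hb
      have hDb' : (D j:ℝ) ≤ D b := by exact_mod_cast hDb
      rcases hab.lt_or_eq with hab | rfl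
      · let i0 : Fin d := ⟨0, by omega⟩
        have h1 := hhi a b hab p hp i0
        have h2 := hlo b q hq i0
        have h3 := hlo a p hp i0
        have h7 : (0:ℝ) ≤ ((2 * D a + 1 : ℕ):ℝ) := by positivity
        push_cast at h2
        have h4 : p i0 ≤ D b := by nlinarith
        have h5 : |p i0 - q i0| ≤ dist p q := by
          have := PiLp.dist_apply_le p q i0
          rwa [Real.dist_eq] at this
        have h6 := neg_abs_le (p i0 - q i0)
        linarith
      · exact blk_avoid d hd _ _ (D a) (haD _) _ (D j) hDb p q hp hq h
  refine ⟨⋃ n, B n, fun n => 2 ^ Kf (D n), fun j => √((D j:ℝ)^2 + 1/2), ?_, ?_, ?_, ?_⟩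
  · refine tendsto_atTop_mono (fun n => ?_) tendsto_natCast_atTop_atTop
    have : n ≤ 2 ^ Kf (D n) := ((hDn n).trans (hKD _)).trans Nat.lt_two_pow_self.le
    exact_mod_cast this
  · refine tendsto_atTop_mono (fun n => ?_) tendsto_natCast_atTop_atTop
    apply Real.le_sqrt_of_sq_le
    have : (n:ℝ) ≤ D n := by exact_mod_cast hDn n
    have h0 : (0:ℝ) ≤ n := by positivity
    nlinarith
  · refine tendsto_const_nhds.congr fun n => ?_
    apply le_antisymm
    · exact (blk_content d hd s hs0 hsd _ _ (hKs (D n)) _ _ (subset_iUnion B n)).trans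
        (le_iSup (fun x => dyadicContent s (normTrunc (⋃ n, B n) (2 ^ Kf (D n)) x)) _)
    · exact iSup_le fun x => content_le d s hs0 _ (normTrunc_sub _ _ (by positivity) x)
  · rintro j ⟨p, hp, q, hq, h⟩
    rw [mem_iUnion] at hp hq
    obtain ⟨a, hp⟩ := hp
    obtain ⟨b, hq⟩ := hq
    rcases le_total a b with hab | hab
    · exact main j a b p q hab hp hq h
    · exact main j b a q p hab hq hp (by rw [dist_comm]; exact h)
end
end

section
/- Let d ≥ 2, let σ > 1 be rational with q an integer such that both q and q^σ are integer powers of 2, and suppose c_0 q^{σ−1} exceeds a fixed dimensional constant, where c_0 is the dimensional constant from the analysis of F[q;σ]. Define E_1 := F[q;σ], E_n := ∪_{p ∈ ℤ_q^d} (p/q + q^{−σ} E_{n−1}) for n ≥ 2, and E* := ∩_{n=1}^∞ E_n. Then for every a > 0, the interval [0, a) is NOT contained in Δ(E*). -/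
open MeasureTheory Set Metric Filter
open scoped ENNReal NNReal Topology

noncomputable section

/-- The building block set `F[q;σ] = ⋃_{p ∈ ℤ_q^d} (p/q + q^{-σ}[0,1]^d)`. -/
def Fqs (d q : ℕ) (σ : ℝ) : Set (Euc d) :=
  {x | ∃ p : Fin d → ℕ, (∀ i, p i < q) ∧
    ∀ i, (p i : ℝ) / q ≤ x i ∧ x i ≤ (p i : ℝ) / q + (q : ℝ) ^ (-σ)}

/-- The vector `p/q ∈ ℝ^d` for `p ∈ ℤ_q^d`. -/
def latticePt (d q : ℕ) (p : Fin d → ℕ) : Euc d :=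
  (WithLp.equiv 2 (Fin d → ℝ)).symm (fun i => (p i : ℝ) / q)

/-- The iterates of the self-similar construction: `E_1 = F[q;σ]` and
`E_{n+1} = ⋃_{p ∈ ℤ_q^d} (p/q + q^{-σ} E_n)`; here `iterE d q σ n = E_{n+1}`. -/
def iterE (d q : ℕ) (σ : ℝ) : ℕ → Set (Euc d)
  | 0 => Fqs d q σ
  | n + 1 => ⋃ p ∈ {p : Fin d → ℕ | ∀ i, p i < q},
      (fun x : Euc d => latticePt d q p + (q : ℝ) ^ (-σ) • x) '' iterE d q σ n

/-- The limit set `E* = ⋂_n E_n` of the self-similar construction. -/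
def Estar (d q : ℕ) (σ : ℝ) : Set (Euc d) := ⋂ n, iterE d q σ n

theorem aux_sep (q a b : ℕ) (l x y : ℝ) (hq : 0 < q) (hab : a ≠ b)
    (hl : l * q ≤ 1 / 4) (hx : (a : ℝ) / q ≤ x ∧ x ≤ (a : ℝ) / q + l)
    (hy : (b : ℝ) / q ≤ y ∧ y ≤ (b : ℝ) / q + l) : 1 / (2 * (q : ℝ)) < |x - y| := by
  have hq' : (0 : ℝ) < q := by exact_mod_cast hq
  have hl' : l ≤ 1 / 4 * (1 / q) := by
    rw [mul_one_div, le_div_iff₀ hq']; exact hl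
  have hi : (0 : ℝ) < 1 / q := by positivity
  have h2 : 1 / (2 * (q : ℝ)) = 1 / 2 * (1 / q) := by field_simp
  rw [h2]
  rcases lt_or_gt_of_ne hab with h | h
  · have h1 : (a : ℝ) + 1 ≤ b := by exact_mod_cast h
    have h3 : (a : ℝ) / q + 1 / q ≤ b / q := by
      rw [← add_div]; exact div_le_div_of_nonneg_right h1 hq'.le
    rw [lt_abs]; right; linarith [hx.1, hx.2, hy.1, hy.2]
  · have h1 : (b : ℝ) + 1 ≤ a := by exact_mod_cast h
    have h3 : (b : ℝ) / q + 1 / q ≤ a / q := by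
      rw [← add_div]; exact div_le_div_of_nonneg_right h1 hq'.le
    rw [lt_abs]; left; linarith [hx.1, hx.2, hy.1, hy.2]

theorem aux_coord {d : ℕ} (x y : Euc d) (i : Fin d) : |x i - y i| ≤ dist x y := by
  have := PiLp.norm_apply_le (p := 2) (x - y) i
  rw [dist_eq_norm]
  simpa using this

theorem aux_small {d : ℕ} (hd : 1 ≤ d) (x y : Euc d) (l : ℝ) (hl : 0 ≤ l)
    (h : ∀ i, |x i - y i| ≤ l) : dist x y ≤ d * l := by
  rw [EuclideanSpace.dist_eq]
  apply Real.sqrt_le_iff.2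
  refine ⟨by positivity, ?_⟩
  have hd' : (1 : ℝ) ≤ d := by exact_mod_cast hd
  calc ∑ i, dist (x i) (y i) ^ 2 ≤ ∑ _i : Fin d, l ^ 2 := by
        apply Finset.sum_le_sum
        intro i _
        rw [Real.dist_eq]
        exact pow_le_pow_left₀ (abs_nonneg _) (h i) 2
    _ = d * l ^ 2 := by simp
    _ ≤ (d * l) ^ 2 := by nlinarith [mul_nonneg (mul_nonneg (sub_nonneg.2 hd') (by linarith : (0:ℝ) ≤ d)) (sq_nonneg l)]

theorem aux_cell {q a : ℕ} {l x : ℝ} (h : a < q) (hl0 : 0 ≤ l) (hl : l * q ≤ 1 / 4)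
    (hx : (a : ℝ) / q ≤ x ∧ x ≤ (a : ℝ) / q + l) : x ∈ Icc (0 : ℝ) 1 := by
  have hq' : (0 : ℝ) < q := by exact_mod_cast (Nat.zero_le a).trans_lt h
  have hl' : l ≤ 1 / 4 * (1 / q) := by
    rw [mul_one_div, le_div_iff₀ hq']; exact hl
  have hi : (0 : ℝ) < 1 / q := by positivity
  have h1 : (a : ℝ) + 1 ≤ q := by exact_mod_cast h
  have h3 : (a : ℝ) / q + 1 / q ≤ 1 := by
    rw [← add_div, div_le_one hq']; exact h1
  have : (0 : ℝ) ≤ a / q := by positivity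
  constructor <;> linarith [hx.1, hx.2]

theorem aux_img {d q : ℕ} (p : Fin d → ℕ) (l : ℝ) (hl0 : 0 ≤ l) (x : Euc d)
    (hx : x ∈ unitCube d) (i : Fin d) :
    (p i : ℝ) / q ≤ (latticePt d q p + l • x) i ∧
      (latticePt d q p + l • x) i ≤ (p i : ℝ) / q + l := by
  have h := hx i
  have e : (latticePt d q p + l • x) i = (p i : ℝ) / q + l * x i := by
    simp [latticePt]
  rw [e]
  constructor
  · have := mul_nonneg hl0 h.1
    linarith
  · have := mul_le_mul_of_nonneg_left h.2 hl0
    linarith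

theorem aux_cube {d q : ℕ} {σ : ℝ} (hl : (q : ℝ) ^ (-σ) * q ≤ 1 / 4) (n : ℕ) :
    iterE d q σ n ⊆ unitCube d := by
  have hl0 : 0 ≤ (q : ℝ) ^ (-σ) := by positivity
  induction n with
  | zero =>
    rintro x ⟨p, hp, hx⟩ i
    exact aux_cell (hp i) hl0 hl (hx i)
  | succ n ih =>
    intro x hx i
    simp only [iterE, mem_iUnion, mem_image, mem_setOf_eq] at hx
    obtain ⟨p, hp, z, hz, rfl⟩ := hx
    exact aux_cell (hp i) hl0 hl (aux_img p _ hl0 z (ih hz) i)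

theorem aux_main {d q : ℕ} {σ : ℝ} (hd : 1 ≤ d) (hq : 0 < q)
    (hl : d * ((q : ℝ) ^ (-σ) * q) ≤ 1 / 4) (n : ℕ) :
    ∀ x ∈ iterE d q σ n, ∀ y ∈ iterE d q σ n,
      dist x y ≠ ((q : ℝ) ^ (-σ)) ^ n * (1 / (2 * (q : ℝ))) := by
  have hq' : (0 : ℝ) < q := by exact_mod_cast hq
  have hq1 : (1 : ℝ) ≤ q := by exact_mod_cast hq
  have hd' : (1 : ℝ) ≤ d := by exact_mod_cast hd
  have hl0 : 0 < (q : ℝ) ^ (-σ) := by positivity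
  have hl4 : (q : ℝ) ^ (-σ) * q ≤ 1 / 4 := by
    have : 0 < (q : ℝ) ^ (-σ) * q := by positivity
    nlinarith
  have hl1 : (q : ℝ) ^ (-σ) ≤ 1 := by nlinarith
  have hcube := fun n => aux_cube (d := d) hl4 n
  generalize hL : (q : ℝ) ^ (-σ) = l at *
  induction n with
  | zero =>
    rintro x ⟨p, hp, hx⟩ y ⟨p', hp', hy⟩ h
    rw [hL] at hx hy
    rw [pow_zero, one_mul] at h
    by_cases hpp : p = p'
    · subst hpp
      have := aux_small hd x y l hl0.le (fun i => by
        rw [abs_le]; constructor <;> linarith [(hx i).1, (hx i).2, (hy i).1, (hy i).2])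
      rw [h, div_le_iff₀ (by positivity)] at this
      nlinarith
    · obtain ⟨i, hi⟩ := Function.ne_iff.1 hpp
      have h1 := aux_sep q _ _ l _ _ hq hi hl4 (hx i) (hy i)
      have h2 := aux_coord x y i
      linarith
  | succ n ih =>
    intro x hx y hy h
    simp only [iterE, mem_iUnion, mem_image, mem_setOf_eq, hL] at hx hy
    obtain ⟨p, hp, z, hz, rfl⟩ := hx
    obtain ⟨p', hp', w, hw, rfl⟩ := hy
    by_cases hpp : p = p'
    · subst hpp
      rw [dist_add_left, dist_smul₀, Real.norm_of_nonneg hl0.le, pow_succ', mul_assoc] at h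
      exact ih z hz w hw (mul_left_cancel₀ hl0.ne' h)
    · obtain ⟨i, hi⟩ := Function.ne_iff.1 hpp
      have h1 := aux_sep q _ _ l _ _ hq hi hl4 (aux_img p l hl0.le z (hcube n hz) i)
        (aux_img p' l hl0.le w (hcube n hw) i)
      have h2 := aux_coord (latticePt d q p + l • z) (latticePt d q p' + l • w) i
      have h3 : l ^ (n + 1) * (1 / (2 * (q : ℝ))) ≤ 1 / (2 * (q : ℝ)) :=
        mul_le_of_le_one_left (by positivity) (pow_le_one₀ hl0.le hl1)
      linarith

/-- Lemma 2.8: for `d ≥ 2` there is a dimensional constant `C > 0` such that for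
`σ > 1` rational and `q`, `q^σ` integer powers of 2 with `q^{σ-1} ≥ C`, the distance
set of the self-similar set `E*` contains no interval of the form `[0,a)`. -/
theorem statement16 (d : ℕ) (hd : 2 ≤ d) :
    ∃ C : ℝ, 0 < C ∧
      ∀ σ : ℝ, 1 < σ → (∃ r : ℚ, (r : ℝ) = σ) →
      ∀ q N₁ N₂ : ℕ, (q : ℝ) = 2 ^ N₁ → (q : ℝ) ^ σ = 2 ^ N₂ →
        C ≤ (q : ℝ) ^ (σ - 1) →
        ∀ a : ℝ, 0 < a →
          ¬ (Ico (0:ℝ) a ⊆ distSet (Estar d q σ) (Estar d q σ)) := by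
  have hd0 : (1 : ℝ) ≤ d := by exact_mod_cast (by omega : 1 ≤ d)
  refine ⟨4 * d, by positivity, ?_⟩
  intro σ hσ _ q N₁ N₂ hq1 _ hC a ha hsub
  have hq' : (0 : ℝ) < q := by rw [hq1]; positivity
  have hq : 0 < q := by exact_mod_cast hq'
  have hqq : (1 : ℝ) ≤ q := by exact_mod_cast hq
  have hl0 : 0 < (q : ℝ) ^ (-σ) := by positivity
  have e : (q : ℝ) ^ (-σ) * q * (q : ℝ) ^ (σ - 1) = 1 := by
    nth_rewrite 2 [← Real.rpow_one (q : ℝ)]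
    rw [← Real.rpow_add hq', ← Real.rpow_add hq']
    simp
  have hP : 0 < (q : ℝ) ^ (-σ) * q := by positivity
  have hl : d * ((q : ℝ) ^ (-σ) * q) ≤ 1 / 4 := by
    have := mul_le_mul_of_nonneg_left hC hP.le
    rw [e] at this
    linarith
  have hl1 : (q : ℝ) ^ (-σ) < 1 := by nlinarith
  obtain ⟨n, hn⟩ := exists_pow_lt_of_lt_one ha hl1
  have hmem : ((q : ℝ) ^ (-σ)) ^ n * (1 / (2 * (q : ℝ))) ∈ Ico (0 : ℝ) a := by
    refine ⟨by positivity, lt_of_le_of_lt (mul_le_of_le_one_right (by positivity) ?_) hn⟩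
    rw [div_le_one (by positivity)]
    linarith
  obtain ⟨x, hx, y, hy, h⟩ := hsub hmem
  exact aux_main (by omega) hq hl n x (mem_iInter.1 hx n) y (mem_iInter.1 hy n) h
end
end

section
/- Let d ≥ 2 and t > 0, and let μ and ν be probability measures supported on compact sets E ⊆ [0,1]^d and F ⊆ [0,1]^d respectively, each with finite (d+1)/2-energy: I_μ((d+1)/2) < ∞ and I_ν((d+1)/2) < ∞. If the real part of the integral ∫_{ℝ^d} μ̂(ξ) · conj(ν̂(ξ)) · σ̂(tξ) dξ is strictly positive, then there exist x ∈ E and y ∈ F with |x − y| = t; in other words, t ∈ Δ(E,F). -/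
open MeasureTheory Set Metric Filter
open scoped ENNReal NNReal Topology

noncomputable section

/-- The normalized surface measure `σ` on the unit sphere `S^{d-1} ⊆ ℝ^d`. -/
def sphereMeasure (d : ℕ) : Measure (Metric.sphere (0 : Euc d) 1) :=
  ((volume : Measure (Euc d)).toSphere Set.univ)⁻¹ • (volume : Measure (Euc d)).toSphere

/-- The Fourier transform `σ̂(ξ) = ∫_{S^{d-1}} e^{-i x·ξ} dσ(x)` of the normalized
surface measure on the unit sphere. -/
def sphereFT (d : ℕ) (ξ : Euc d) : ℂ :=
  ∫ x : Metric.sphere (0 : Euc d) 1,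
    Complex.exp (-(Complex.I * ((inner ℝ (x : Euc d) ξ : ℝ) : ℂ))) ∂(sphereMeasure d)

/-- The `s`-energy `I_μ(s) = ∬ |x-y|^{-s} dμ(x) dμ(y)` of a measure. -/
def energy {d : ℕ} (μ : Measure (Euc d)) (s : ℝ) : ℝ≥0∞ :=
  ∫⁻ x, ∫⁻ y, edist x y ^ (-s) ∂μ ∂μ

/-- The Fourier transform `μ̂(ξ) = ∫ e^{-i x·ξ} dμ(x)` of a finite Borel measure. -/
def fourierM {d : ℕ} (μ : Measure (Euc d)) (ξ : Euc d) : ℂ :=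
  ∫ x, Complex.exp (-(Complex.I * ((inner ℝ x ξ : ℝ) : ℂ))) ∂μ

instance sphereMeasure_finite (d : ℕ) : IsFiniteMeasure (sphereMeasure d) := by
  constructor
  unfold sphereMeasure
  rw [Measure.smul_apply, smul_eq_mul]
  exact lt_of_le_of_lt (ENNReal.inv_mul_le_one _) ENNReal.one_lt_top

/-- The phase vector. -/
def zvec (d : ℕ) (t : ℝ) (p : Euc d × (Euc d × Metric.sphere (0 : Euc d) 1)) : Euc d :=
  p.1 - p.2.1 + t • (p.2.2 : Euc d)

lemma zvec_cont (d : ℕ) (t : ℝ) : Continuous (zvec d t) := by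
  unfold zvec
  fun_prop

lemma triple_eq (d : ℕ) (t : ℝ) (μ ν : Measure (Euc d)) [IsProbabilityMeasure μ]
    [IsProbabilityMeasure ν] (ξ : Euc d) :
    fourierM μ ξ * (starRingEnd ℂ) (fourierM ν ξ) * sphereFT d (t • ξ) =
      ∫ p, Complex.exp (-Complex.I * ((inner ℝ (zvec d t p) ξ : ℝ) : ℂ))
        ∂(μ.prod (ν.prod (sphereMeasure d))) := by
  unfold fourierM sphereFT
  rw [← integral_conj, mul_assoc, ← integral_prod_mul, ← integral_prod_mul]
  congr 1
  ext p
  rw [← Complex.exp_conj, ← Complex.exp_add, ← Complex.exp_add]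
  congr 1
  simp only [zvec, inner_add_left, inner_sub_left, inner_smul_left, inner_smul_right]
  simp
  ring

lemma gauss_swap (d : ℕ) (t : ℝ) (ρ : Measure (Euc d × (Euc d × Metric.sphere (0 : Euc d) 1)))
    [IsFiniteMeasure ρ] (b : ℝ) (hb : 0 < b) :
    ∫ ξ : Euc d, Complex.exp (-(b:ℂ) * (‖ξ‖:ℂ)^2) *
      ∫ p, Complex.exp (-Complex.I * ((inner ℝ (zvec d t p) ξ : ℝ) : ℂ)) ∂ρ =
    ∫ p, (Real.pi / b : ℂ) ^ ((d : ℂ) / 2) *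
      Complex.exp ((-Complex.I)^2 * (‖zvec d t p‖:ℂ)^2 / (4 * b)) ∂ρ := by
  have hg := fun p => GaussianFourier.integral_cexp_neg_mul_sq_norm_add (V := Euc d)
    (b := (b:ℂ)) (by simpa using hb) (-Complex.I) (zvec d t p)
  simp only [finrank_euclideanSpace, Fintype.card_fin] at hg
  simp_rw [← hg, ← integral_const_mul, ← Complex.exp_add]
  refine integral_integral_swap ?_
  have hi : Integrable (fun ξ : Euc d => Complex.exp (-(b:ℂ) * (‖ξ‖:ℂ)^2)) := by
    simpa using GaussianFourier.integrable_cexp_neg_mul_sq_norm_add (V := Euc d)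
      (b := (b:ℂ)) (by simpa using hb) 0 0
  have h1 := hi.mul_prod (integrable_const (μ := ρ) (1:ℂ))
  refine h1.mono ?_ ?_
  · apply Continuous.aestronglyMeasurable
    have := zvec_cont d t
    simp only [Function.uncurry_def]
    fun_prop
  · refine ae_of_all _ fun q => ?_
    simp [Function.uncurry_def, Complex.norm_exp]

/-- Proposition 5.1(b) (converse direction): if `μ, ν` are probability measures on
compact sets `E, F ⊆ [0,1]^d` with finite `(d+1)/2`-energy and the (real part of the)
integral `∫ μ̂(ξ) conj(ν̂(ξ)) σ̂(tξ) dξ` is strictly positive, then `t ∈ Δ(E,F)`. -/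
theorem statement18 (d : ℕ) (hd : 2 ≤ d) (t : ℝ) (ht : 0 < t)
    (μ ν : Measure (Euc d)) (hμ : IsProbabilityMeasure μ) (hν : IsProbabilityMeasure ν)
    (E F : Set (Euc d)) (hEcpt : IsCompact E) (hFcpt : IsCompact F)
    (hE : E ⊆ unitCube d) (hF : F ⊆ unitCube d)
    (hμE : μ Eᶜ = 0) (hνF : ν Fᶜ = 0)
    (hIμ : energy μ (((d : ℝ) + 1) / 2) < ⊤)
    (hIν : energy ν (((d : ℝ) + 1) / 2) < ⊤)
    (hpos : 0 < (∫ ξ : Euc d,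
        fourierM μ ξ * (starRingEnd ℂ) (fourierM ν ξ) * sphereFT d (t • ξ)).re) :
    t ∈ distSet E F := by
  by_contra hnot
  set f : Euc d → ℂ := fun ξ =>
    fourierM μ ξ * (starRingEnd ℂ) (fourierM ν ξ) * sphereFT d (t • ξ) with hf
  have hint : Integrable f := by
    by_contra h
    rw [integral_undef h] at hpos
    simp at hpos
  obtain ⟨δ, hδ, hδ'⟩ := (hEcpt.prod hFcpt).exists_forall_le' (a := (0:ℝ))
    (f := fun q : Euc d × Euc d => |dist q.1 q.2 - t|) (by fun_prop) (by
      rintro ⟨x, y⟩ ⟨hx, hy⟩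
      refine abs_pos.2 fun h => hnot ⟨x, hx, y, hy, ?_⟩
      simpa [sub_eq_zero] using h)
  set ρ := μ.prod (ν.prod (sphereMeasure d)) with hρ
  have hae : ∀ᵐ p ∂ρ, δ ≤ ‖zvec d t p‖ := by
    have h1 : ∀ᵐ p ∂ρ, p.1 ∈ E :=
      Measure.quasiMeasurePreserving_fst.ae (p := fun x => x ∈ E) hμE
    have h2 : ∀ᵐ p ∂ρ, p.2.1 ∈ F :=
      (Measure.quasiMeasurePreserving_fst.comp Measure.quasiMeasurePreserving_snd).ae
        (p := fun x => x ∈ F) hνF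
    filter_upwards [h1, h2] with p hp1 hp2
    refine (hδ' (p.1, p.2.1) ⟨hp1, hp2⟩).trans ?_
    have h := abs_norm_sub_norm_le (p.1 - p.2.1) (-(t • (p.2.2 : Euc d)))
    have h3 : ‖(p.2.2 : Euc d)‖ = 1 := by simp
    rw [norm_neg, norm_smul, h3, mul_one, Real.norm_of_nonneg ht.le, sub_neg_eq_add] at h
    rw [dist_eq_norm]
    exact h
  have hlim1 : Tendsto (fun u : ℝ => ∫ ξ : Euc d,
      Complex.exp (-((u⁻¹ : ℝ):ℂ) * (‖ξ‖:ℂ)^2) * f ξ) atTop (𝓝 (∫ ξ, f ξ)) := by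
    refine tendsto_integral_filter_of_dominated_convergence (fun ξ => ‖f ξ‖) ?_ ?_ hint.norm ?_
    · refine Eventually.of_forall fun u => AEStronglyMeasurable.mul ?_ hint.1
      exact Continuous.aestronglyMeasurable (by fun_prop)
    · filter_upwards [eventually_gt_atTop 0] with u hu
      refine ae_of_all _ fun ξ => ?_
      rw [norm_mul]
      refine mul_le_of_le_one_left (norm_nonneg _) ?_
      rw [Complex.norm_exp]
      refine Real.exp_le_one_iff.2 ?_
      have : (-((u⁻¹ : ℝ):ℂ) * (‖ξ‖:ℂ)^2) = ((-(u⁻¹ * ‖ξ‖^2) : ℝ) : ℂ) := by push_cast; ring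
      rw [this, Complex.ofReal_re]
      have : 0 ≤ u⁻¹ * ‖ξ‖^2 := by positivity
      linarith
    · refine ae_of_all _ fun ξ => ?_
      have h0 : Tendsto (fun u : ℝ => u⁻¹) atTop (𝓝 0) := tendsto_inv_atTop_zero
      have hc : Continuous fun v : ℝ => Complex.exp (-(v:ℂ) * (‖ξ‖:ℂ)^2) * f ξ := by fun_prop
      have := (hc.tendsto 0).comp h0
      simpa [Function.comp_def] using this
  have hlim2 : Tendsto (fun u : ℝ => ∫ ξ : Euc d,
      Complex.exp (-((u⁻¹ : ℝ):ℂ) * (‖ξ‖:ℂ)^2) * f ξ) atTop (𝓝 0) := by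
    have hr := (tendsto_rpow_mul_exp_neg_mul_atTop_nhds_zero ((d:ℝ)/2) (δ^2/4)
      (by positivity)).const_mul (Real.pi ^ ((d:ℝ)/2) * ρ.real univ)
    rw [mul_zero] at hr
    refine squeeze_zero_norm' ?_ hr
    filter_upwards [eventually_gt_atTop 0] with u hu
    have hu' : 0 < u⁻¹ := inv_pos.2 hu
    simp only [hf, triple_eq]
    rw [gauss_swap d t _ u⁻¹ hu']
    have hbd := norm_integral_le_of_norm_le_const (μ := ρ)
      (f := fun p => (Real.pi / (u⁻¹ : ℝ) : ℂ) ^ ((d : ℂ) / 2) *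
        Complex.exp ((-Complex.I)^2 * (‖zvec d t p‖:ℂ)^2 / (4 * (u⁻¹ : ℝ))))
      (C := Real.pi ^ ((d:ℝ)/2) * (u ^ ((d:ℝ)/2) * Real.exp (-(δ^2/4) * u))) (by
        filter_upwards [hae] with p hp
        have e1 : (Real.pi / (u⁻¹ : ℝ) : ℂ) ^ ((d : ℂ) / 2) =
            ((Real.pi ^ ((d:ℝ)/2) * u ^ ((d:ℝ)/2) : ℝ) : ℂ) := by
          rw [← Real.mul_rpow Real.pi_pos.le hu.le, Complex.ofReal_cpow (by positivity)]
          push_cast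
          simp
        have e2 : (-Complex.I)^2 * (‖zvec d t p‖:ℂ)^2 / (4 * (u⁻¹ : ℝ)) =
            ((-(‖zvec d t p‖^2 / 4) * u : ℝ) : ℂ) := by
          push_cast
          rw [neg_sq, Complex.I_sq]
          have : (u:ℂ) ≠ 0 := by exact_mod_cast hu.ne'
          field_simp
        rw [e1, e2, norm_mul, ← Complex.ofReal_exp, Complex.norm_real, Complex.norm_real,
          Real.norm_of_nonneg (by positivity), Real.norm_of_nonneg (by positivity), ← mul_assoc]
        gcongr)
    refine hbd.trans (le_of_eq ?_)
    ring
  have h0 := tendsto_nhds_unique hlim1 hlim2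
  rw [h0] at hpos
  simp at hpos
end
end

section
/- For any dimension d ≥ 2, let c_d := ω_d / (2^{d+4} d^{d/2}), where ω_d is the volume of the unit ball in ℝ^d. Fix parameters C_0 ≥ 1, 0 < α ≤ 1/8 < 1 < N, and a, b, δ ∈ (0, 1/4) satisfying: Nα > (d−1)/2, 2b ≤ δ, a < b ≤ c_d, and C_0 · b^{Nα − (d−1)/2} < c_d. Then any probability measure μ supported inside [0,1]^d that satisfies the finite energy condition I_μ((d+1)/2 + α) ≤ C_0 and the spectral gap condition F_μ(a^{−N}) − F_μ(δ/b) ≤ a must obey ∫_{ℝ^d} |μ̂(ξ)|² σ̂(tξ) dξ ≥ c_d > 0 for every t ∈ [a, b]; in particular, Δ(supp μ) ⊇ [a, b]. -/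
open MeasureTheory Set Metric Filter
open scoped ENNReal NNReal Topology

noncomputable section

/-- The partial `L²`-Fourier integral `F_μ(T) = ∫_{|ξ| ≤ T} |μ̂(ξ)|² dξ`. -/
def FmuInt {d : ℕ} (μ : Measure (Euc d)) (T : ℝ) : ℝ :=
  ∫ ξ in {ξ : Euc d | ‖ξ‖ ≤ T}, ‖fourierM μ ξ‖ ^ 2

/-- The (topological) support of a measure: points all of whose balls have positive
measure. -/
def msupport {d : ℕ} (μ : Measure (Euc d)) : Set (Euc d) :=
  {x | ∀ r : ℝ, 0 < r → 0 < μ (Metric.ball x r)}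

/-- The dimensional constant `c_d = ω_d / (2^{d+4} d^{d/2})`, where `ω_d` is the
volume of the unit ball in `ℝ^d`. -/
def cdConst (d : ℕ) : ℝ :=
  (volume (Metric.ball (0 : Euc d) 1)).toReal / (2 ^ (d + 4) * (d : ℝ) ^ ((d : ℝ) / 2))



open scoped Pointwise

/-- The sphere measure, as a measure on the ambient space. -/
def sigE (d : ℕ) : Measure (Euc d) := (sphereMeasure d).map Subtype.val

lemma sphereMeasure_prob (d : ℕ) (hd : 2 ≤ d) : IsProbabilityMeasure (sphereMeasure d) := by
  constructor
  have hne : (volume : Measure (Euc d)).toSphere Set.univ ≠ 0 := by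
    rw [Measure.toSphere_apply_univ]
    have h1 : (volume (Metric.ball (0 : Euc d) 1)) ≠ 0 := (measure_ball_pos _ _ one_pos).ne'
    have h2 : Module.finrank ℝ (Euc d) = d := by simp
    rw [h2]
    have : (d : ℝ≥0∞) ≠ 0 := by
      simp; omega
    exact mul_ne_zero this h1
  have hfin : (volume : Measure (Euc d)).toSphere Set.univ ≠ ⊤ := measure_ne_top _ _
  rw [sphereMeasure, Measure.smul_apply, smul_eq_mul]
  exact ENNReal.inv_mul_cancel hne hfin

lemma sigE_prob (d : ℕ) (hd : 2 ≤ d) : IsProbabilityMeasure (sigE d) := by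
  have := sphereMeasure_prob d hd
  exact Measure.isProbabilityMeasure_map (by fun_prop)

lemma sigE_ae (d : ℕ) : ∀ᵐ x ∂(sigE d), ‖x‖ = 1 := by
  rw [sigE, ae_map_iff (by fun_prop)]
  · filter_upwards with x
    exact norm_eq_of_mem_sphere x
  · exact measurableSet_eq_fun (by fun_prop) (by fun_prop)

lemma sigE_map (d : ℕ) (R : Euc d ≃ₗᵢ[ℝ] Euc d) : (sigE d).map R = sigE d := by
  have key : ∀ A : Set (Euc d), MeasurableSet A → sigE d A =
      ((volume : Measure (Euc d)).toSphere Set.univ)⁻¹ *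
      (Module.finrank ℝ (Euc d) * volume (Ioo (0:ℝ) 1 • (A ∩ Metric.sphere (0 : Euc d) 1))) := by
    intro A hA
    rw [sigE, Measure.map_apply (by fun_prop) hA, sphereMeasure, Measure.smul_apply,
      Measure.toSphere_apply' _ (measurable_subtype_coe hA), smul_eq_mul,
      Subtype.image_preimage_coe, inter_comm]
  ext A hA
  rw [Measure.map_apply R.continuous.measurable hA, key _ (R.continuous.measurable hA), key _ hA]
  have : Ioo (0:ℝ) 1 • ((R ⁻¹' A) ∩ Metric.sphere (0 : Euc d) 1) =
      R ⁻¹' (Ioo (0:ℝ) 1 • (A ∩ Metric.sphere (0 : Euc d) 1)) := by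
    ext x
    simp only [Set.mem_smul, mem_preimage, mem_inter_iff, mem_sphere_zero_iff_norm]
    constructor
    · rintro ⟨r, hr, y, ⟨hy1, hy2⟩, rfl⟩
      exact ⟨r, hr, R y, ⟨hy1, by simpa using hy2⟩, by simp⟩
    · rintro ⟨r, hr, y, ⟨hy1, hy2⟩, h⟩
      refine ⟨r, hr, R.symm y, ⟨by simpa using hy1, by simpa using hy2⟩, ?_⟩
      apply R.injective
      simp [h]
  rw [this]
  have hmp : MeasurePreserving R.toHomeomorph.toMeasurableEquiv volume volume :=
    R.measurePreserving
  have := hmp.measure_preimage_equiv (Ioo (0:ℝ) 1 • (A ∩ Metric.sphere (0 : Euc d) 1))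
  congr 2

/-- plane rotation -/
def rotL (d : ℕ) (e w : Euc d) (c s : ℝ) : Euc d →ₗ[ℝ] Euc d where
  toFun x := x + ((c - 1) * inner ℝ x e - s * inner ℝ x w) • e +
    (s * inner ℝ x e + (c - 1) * inner ℝ x w) • w
  map_add' x y := by
    simp only [inner_add_left]
    module
  map_smul' r x := by
    simp only [inner_smul_left, RingHom.id_apply, conj_trivial]
    module

lemma rot_exists (d : ℕ) (e w : Euc d) (he : ‖e‖ = 1) (hw : ‖w‖ = 1) (hew : inner ℝ e w = 0)
    (θ : ℝ) : ∃ R : Euc d ≃ₗᵢ[ℝ] Euc d, ∀ x,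
      inner ℝ (R x) e = Real.cos θ * inner ℝ x e - Real.sin θ * inner ℝ x w ∧
      inner ℝ (R x) w = Real.sin θ * inner ℝ x e + Real.cos θ * inner ℝ x w := by
  have hee : inner ℝ e e = 1 := by simp [he]
  have hww : inner ℝ w w = 1 := by simp [hw]
  have hwe : inner ℝ w e = 0 := by rw [real_inner_comm]; exact hew
  have hcs := Real.cos_sq_add_sin_sq θ
  have hnorm : ∀ x, ‖rotL d e w (Real.cos θ) (Real.sin θ) x‖ = ‖x‖ := by
    intro x
    have : ‖rotL d e w (Real.cos θ) (Real.sin θ) x‖ ^ 2 = ‖x‖ ^ 2 := by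
      rw [← real_inner_self_eq_norm_sq, ← real_inner_self_eq_norm_sq]
      simp only [rotL, LinearMap.coe_mk, AddHom.coe_mk, inner_add_left, inner_add_right,
        inner_smul_left, inner_smul_right, hee, hww, hew, hwe, conj_trivial,
        real_inner_comm x e, real_inner_comm x w]
      generalize inner ℝ x e = p
      generalize inner ℝ x w = q
      linear_combination (p ^ 2 + q ^ 2) * hcs
    exact (sq_eq_sq₀ (norm_nonneg _) (norm_nonneg _)).1 this
  let I : Euc d →ₗᵢ[ℝ] Euc d := ⟨rotL d e w (Real.cos θ) (Real.sin θ), hnorm⟩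
  refine ⟨I.toLinearIsometryEquiv rfl, fun x => ?_⟩
  have hI : (I.toLinearIsometryEquiv rfl) x = rotL d e w (Real.cos θ) (Real.sin θ) x := rfl
  rw [hI]
  simp only [rotL, LinearMap.coe_mk, AddHom.coe_mk, inner_add_left,
        inner_smul_left, hee, hww, hew, hwe, conj_trivial]
  constructor <;> ring



lemma sigE_abs_inner (d : ℕ) (e : Euc d) (he : ‖e‖ = 1) : ∀ᵐ x ∂(sigE d), |inner ℝ x e| ≤ 1 := by
  filter_upwards [sigE_ae d] with x hx
  calc |inner ℝ x e| ≤ ‖x‖ * ‖e‖ := abs_real_inner_le_norm x e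
    _ = 1 := by rw [hx, he, one_mul]

lemma sig_rot (d : ℕ) (hd : 2 ≤ d) (e w : Euc d) (he : ‖e‖ = 1) (hw : ‖w‖ = 1)
    (hew : inner ℝ e w = 0) (r : ℝ) :
    ∫ x, (inner ℝ x e * Real.sin (r * inner ℝ x e) -
      r * (inner ℝ x w) ^ 2 * Real.cos (r * inner ℝ x e)) ∂(sigE d) = 0 := by
  have := sigE_prob d hd
  set F : ℝ → Euc d → ℝ := fun θ x => (Real.sin θ * inner ℝ x e + Real.cos θ * inner ℝ x w) *
    Real.sin (r * (Real.cos θ * inner ℝ x e - Real.sin θ * inner ℝ x w)) with hF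
  set F' : ℝ → Euc d → ℝ := fun θ x => (Real.cos θ * inner ℝ x e - Real.sin θ * inner ℝ x w) *
      Real.sin (r * (Real.cos θ * inner ℝ x e - Real.sin θ * inner ℝ x w)) +
    (Real.sin θ * inner ℝ x e + Real.cos θ * inner ℝ x w) *
      (Real.cos (r * (Real.cos θ * inner ℝ x e - Real.sin θ * inner ℝ x w)) *
        (r * (-Real.sin θ * inner ℝ x e - Real.cos θ * inner ℝ x w))) with hF'
  have hconst : ∀ θ, ∫ x, F θ x ∂(sigE d) =
      ∫ x, inner ℝ x w * Real.sin (r * inner ℝ x e) ∂(sigE d) := by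
    intro θ
    obtain ⟨R, hR⟩ := rot_exists d e w he hw hew θ
    conv_rhs => rw [← sigE_map d R]
    rw [integral_map R.continuous.aemeasurable (by fun_prop)]
    apply integral_congr_ae
    filter_upwards with x
    rw [(hR x).1, (hR x).2]
  have hd1 : HasDerivAt (fun θ => ∫ x, F θ x ∂(sigE d)) (∫ x, F' 0 x ∂(sigE d)) 0 := by
    refine (hasDerivAt_integral_of_dominated_loc_of_deriv_le (bound := fun _ => 2 + 2 * (|r| * 2))
      (Filter.univ_mem) ?_ ?_ ?_ ?_ (integrable_const _) ?_).2
    · filter_upwards with θ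
      simp only [hF]; fun_prop
    · apply Integrable.of_bound (C := 1) (by simp only [hF]; fun_prop)
      filter_upwards [sigE_abs_inner d e he, sigE_abs_inner d w hw] with x h1 h2
      simp only [hF, Real.sin_zero, Real.cos_zero, zero_mul, one_mul, zero_add, sub_zero, norm_mul,
        Real.norm_eq_abs]
      have := Real.abs_sin_le_one (r * inner ℝ x e)
      nlinarith [abs_nonneg (inner ℝ x w), abs_nonneg (Real.sin (r * inner ℝ x e))]
    · simp only [hF']; fun_prop
    · filter_upwards [sigE_abs_inner d e he, sigE_abs_inner d w hw] with x h1 h2 θ _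
      have a1 := Real.abs_sin_le_one θ
      have a2 := Real.abs_cos_le_one θ
      have b1 : |Real.cos θ * inner ℝ x e - Real.sin θ * inner ℝ x w| ≤ 2 := by
        calc _ ≤ |Real.cos θ * inner ℝ x e| + |Real.sin θ * inner ℝ x w| := abs_sub _ _
          _ ≤ 1 * 1 + 1 * 1 := by rw [abs_mul, abs_mul]; gcongr
          _ = 2 := by norm_num
      have b2 : |Real.sin θ * inner ℝ x e + Real.cos θ * inner ℝ x w| ≤ 2 := by
        calc _ ≤ |Real.sin θ * inner ℝ x e| + |Real.cos θ * inner ℝ x w| := abs_add_le _ _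
          _ ≤ 1 * 1 + 1 * 1 := by rw [abs_mul, abs_mul]; gcongr
          _ = 2 := by norm_num
      have b3 : |-Real.sin θ * inner ℝ x e - Real.cos θ * inner ℝ x w| ≤ 2 := by
        rw [← abs_neg]; convert b2 using 2; ring
      simp only [hF', Real.norm_eq_abs]
      calc _ ≤ _ := abs_add_le _ _
        _ ≤ 2 * 1 + 2 * (1 * (|r| * 2)) := by
          rw [abs_mul, abs_mul, abs_mul, abs_mul r]
          gcongr
          · exact Real.abs_sin_le_one _
          · exact Real.abs_cos_le_one _
        _ = _ := by ring
    · filter_upwards with x θ _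
      have e1 : HasDerivAt (fun θ => Real.sin θ * inner ℝ x e + Real.cos θ * inner ℝ x w)
          (Real.cos θ * inner ℝ x e - Real.sin θ * inner ℝ x w) θ := by
        have := ((Real.hasDerivAt_sin θ).mul_const (inner ℝ x e)).add
          ((Real.hasDerivAt_cos θ).mul_const (inner ℝ x w))
        convert this using 1 <;> first | rfl | ring
      have e2 : HasDerivAt (fun θ => r * (Real.cos θ * inner ℝ x e - Real.sin θ * inner ℝ x w))
          (r * (-Real.sin θ * inner ℝ x e - Real.cos θ * inner ℝ x w)) θ :=
        (((Real.hasDerivAt_cos θ).mul_const (inner ℝ x e)).sub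
          ((Real.hasDerivAt_sin θ).mul_const (inner ℝ x w))).const_mul r
      exact e1.mul e2.sin
  have hd2 : HasDerivAt (fun θ => ∫ x, F θ x ∂(sigE d)) 0 0 := by
    simp only [hconst]
    exact hasDerivAt_const _ _
  have := hd1.unique hd2
  rw [← this]
  apply integral_congr_ae
  filter_upwards with x
  simp only [hF', Real.sin_zero, Real.cos_zero, one_mul, zero_mul, sub_zero, zero_add, neg_zero, zero_sub]
  ring

/-- radial profile of the Fourier transform of the sphere in direction `e` -/
def sf (d : ℕ) (e : Euc d) (r : ℝ) : ℝ := ∫ x, Real.cos (r * inner ℝ x e) ∂(sigE d)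
/-- derivative of `sf` -/
def sg (d : ℕ) (e : Euc d) (r : ℝ) : ℝ := ∫ x, -(inner ℝ x e * Real.sin (r * inner ℝ x e)) ∂(sigE d)

lemma sig_int (d : ℕ) (hd : 2 ≤ d) (F : Euc d → ℝ) (hF : Continuous F) : Integrable F (sigE d) := by
  have := sigE_prob d hd
  obtain ⟨C, hC⟩ := (isCompact_sphere (0 : Euc d) 1).exists_bound_of_continuousOn hF.continuousOn
  apply Integrable.of_bound (C := C) hF.aestronglyMeasurable
  filter_upwards [sigE_ae d] with x hx
  exact hC x (by simpa using hx)

lemma sf_deriv (d : ℕ) (hd : 2 ≤ d) (e : Euc d) (he : ‖e‖ = 1) (r : ℝ) :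
    HasDerivAt (sf d e) (sg d e r) r := by
  have := sigE_prob d hd
  refine (hasDerivAt_integral_of_dominated_loc_of_deriv_le (μ := sigE d) (bound := fun _ => 1)
      (F := fun r x => Real.cos (r * inner ℝ x e))
      (F' := fun r x => -(inner ℝ x e * Real.sin (r * inner ℝ x e)))
      (Filter.univ_mem) ?_ ?_ ?_ ?_ (integrable_const _) ?_).2
  · filter_upwards with θ
    fun_prop
  · exact sig_int d hd _ (by fun_prop)
  · fun_prop
  · filter_upwards [sigE_abs_inner d e he] with x h1 θ _
    rw [norm_neg, norm_mul, Real.norm_eq_abs, Real.norm_eq_abs]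
    exact mul_le_one₀ h1 (abs_nonneg _) (Real.abs_sin_le_one _)
  · filter_upwards with x θ _
    have := ((hasDerivAt_id θ).mul_const (inner ℝ x e)).cos
    exact this.congr_deriv (by simp only [id]; ring)

lemma sg_deriv' (d : ℕ) (hd : 2 ≤ d) (e : Euc d) (he : ‖e‖ = 1) (r : ℝ) :
    HasDerivAt (sg d e) (∫ x, -(inner ℝ x e ^ 2 * Real.cos (r * inner ℝ x e)) ∂(sigE d)) r := by
  have := sigE_prob d hd
  refine (hasDerivAt_integral_of_dominated_loc_of_deriv_le (μ := sigE d) (bound := fun _ => 1)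
      (F' := fun r x => -(inner ℝ x e ^ 2 * Real.cos (r * inner ℝ x e)))
      (Filter.univ_mem) ?_ ?_ ?_ ?_ (integrable_const _) ?_).2
  · filter_upwards with θ
    fun_prop
  · exact sig_int d hd _ (by fun_prop)
  · fun_prop
  · filter_upwards [sigE_abs_inner d e he] with x h1 θ _
    rw [norm_neg, norm_mul, norm_pow, Real.norm_eq_abs, Real.norm_eq_abs]
    exact mul_le_one₀ (pow_le_one₀ (abs_nonneg _) h1) (abs_nonneg _) (Real.abs_cos_le_one _)
  · filter_upwards with x θ _
    have := ((((hasDerivAt_id θ).mul_const (inner ℝ x e)).sin).const_mul (inner ℝ x e)).fun_neg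
    exact this.congr_deriv (by simp only [id]; ring)

lemma sig_ode (d : ℕ) (hd : 2 ≤ d) (e : Euc d) (he : ‖e‖ = 1) (r : ℝ) (hr : r ≠ 0) :
    ∫ x, -(inner ℝ x e ^ 2 * Real.cos (r * inner ℝ x e)) ∂(sigE d) =
      - sf d e r - ((d : ℝ) - 1) / r * sg d e r := by
  have := sigE_prob d hd
  have i0 : Fin d := ⟨0, by omega⟩
  obtain ⟨b, hb⟩ := Orthonormal.exists_orthonormalBasis_extension_of_card_eq (𝕜 := ℝ)
    (E := Euc d) (ι := Fin d) (by simp) (v := fun _ => e) (s := {i0}) (by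
      constructor
      · intro i; exact he
      · intro i j hij
        exact absurd (Subsingleton.elim i j) hij)
  have hbe : b i0 = e := hb i0 rfl
  have hsum : ∑ j ∈ Finset.univ.erase i0,
      ∫ x, (inner ℝ x e * Real.sin (r * inner ℝ x e) -
      r * (inner ℝ x (b j)) ^ 2 * Real.cos (r * inner ℝ x e)) ∂(sigE d) = 0 := by
    apply Finset.sum_eq_zero
    intro j hj
    apply sig_rot d hd e (b j) he (b.orthonormal.1 j)
    rw [← hbe]
    exact b.orthonormal.2 (Finset.ne_of_mem_erase hj).symm
  rw [← integral_finsetSum _ (fun j _ => sig_int d hd _ (by fun_prop))] at hsum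
  have h2 : ∫ x, (((d:ℝ) - 1) * (inner ℝ x e * Real.sin (r * inner ℝ x e)) -
      r * (1 - inner ℝ x e ^ 2) * Real.cos (r * inner ℝ x e)) ∂(sigE d) = 0 := by
    rw [← hsum]
    apply integral_congr_ae
    filter_upwards [sigE_ae d] with x hx
    rw [Finset.sum_sub_distrib, ← Finset.sum_mul, ← Finset.sum_mul, ← Finset.mul_sum]
    have hs : ∑ j, (inner ℝ x (b j)) ^ 2 = 1 := by
      have := b.sum_sq_norm_inner_left x
      simp only [Real.norm_eq_abs, sq_abs] at this
      rw [this, hx]; norm_num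
    rw [← Finset.sum_erase_add _ _ (Finset.mem_univ i0), hbe] at hs
    have hs' : ∑ j ∈ Finset.univ.erase i0, (inner ℝ x (b j)) ^ 2 = 1 - inner ℝ x e ^ 2 := by
      linarith
    rw [hs']
    simp only [Finset.sum_const, Finset.card_erase_of_mem (Finset.mem_univ i0), Finset.card_univ,
      Fintype.card_fin, nsmul_eq_mul]
    rw [Nat.cast_sub (by omega)]
    ring
  have h3 : (∫ x, (((d:ℝ) - 1) * (inner ℝ x e * Real.sin (r * inner ℝ x e)) -
      r * (1 - inner ℝ x e ^ 2) * Real.cos (r * inner ℝ x e)) ∂(sigE d)) =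
      -((d:ℝ) - 1) * sg d e r - r * sf d e r
        - r * ∫ x, -(inner ℝ x e ^ 2 * Real.cos (r * inner ℝ x e)) ∂(sigE d) := by
    rw [sg, sf, ← integral_const_mul, ← integral_const_mul, ← integral_const_mul,
      ← integral_sub (sig_int d hd _ (by fun_prop)) (sig_int d hd _ (by fun_prop)),
      ← integral_sub (sig_int d hd _ (by fun_prop)) (sig_int d hd _ (by fun_prop))]
    congr 1
    ext x
    ring
  rw [h2] at h3
  generalize (∫ x, -(inner ℝ x e ^ 2 * Real.cos (r * inner ℝ x e)) ∂(sigE d)) = J at h3 ⊢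
  field_simp
  linarith

lemma sg_deriv (d : ℕ) (hd : 2 ≤ d) (e : Euc d) (he : ‖e‖ = 1) (r : ℝ) (hr : r ≠ 0) :
    HasDerivAt (sg d e) (- sf d e r - ((d : ℝ) - 1) / r * sg d e r) r := by
  rw [← sig_ode d hd e he r hr]
  exact sg_deriv' d hd e he r

lemma sf_sg_le (d : ℕ) (hd : 2 ≤ d) (e : Euc d) (he : ‖e‖ = 1) (r : ℝ) (hr : 0 ≤ r) :
    sf d e r ^ 2 + sg d e r ^ 2 ≤ 1 := by
  have := sigE_prob d hd
  have h : AntitoneOn (fun r => sf d e r ^ 2 + sg d e r ^ 2) (Ici 0) := by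
    have hder : ∀ r, HasDerivAt (fun r => sf d e r ^ 2 + sg d e r ^ 2) _ r := fun r =>
      ((sf_deriv d hd e he r).pow 2).add ((sg_deriv' d hd e he r).pow 2)
    apply antitoneOn_of_deriv_nonpos (convex_Ici 0)
    · exact fun r _ => (hder r).continuousAt.continuousWithinAt
    · exact fun r _ => (hder r).differentiableAt.differentiableWithinAt
    · intro r hr
      rw [interior_Ici, mem_Ioi] at hr
      rw [(hder r).deriv, sig_ode d hd e he r hr.ne']
      have : (1:ℝ) ≤ d := by exact_mod_cast (by omega : 1 ≤ d)
      have h2 : 0 ≤ ((d : ℝ) - 1) / r * sg d e r ^ 2 := by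
        have : 0 ≤ (d:ℝ) - 1 := by linarith
        positivity
      simp only [Nat.cast_ofNat, Nat.add_one_sub_one, pow_one]
      nlinarith
  have := h (mem_Ici.2 le_rfl) (mem_Ici.2 hr) hr
  simpa [sf, sg] using this


/-- decay from the Bessel equation, the case `n = 1`. -/
lemma bessel_decay_one (f g : ℝ → ℝ) (hf : ∀ r, 0 < r → HasDerivAt f (g r) r)
    (hg : ∀ r, 0 < r → HasDerivAt g (- f r - 1 / r * g r) r)
    (hfg : ∀ r, 0 < r → f r ^ 2 + g r ^ 2 ≤ 1) (r : ℝ) (hr : 1 / 2 ≤ r) :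
    f r ^ 2 * r ≤ 2 := by
  set E : ℝ → ℝ := fun r => r * ((g r + f r / (2 * r)) ^ 2 + (1 + 1 / (4 * r ^ 2)) * f r ^ 2) with hE
  have hder : ∀ r, 0 < r → HasDerivAt E (- (1 / (2 * r ^ 2)) * f r ^ 2) r := by
    intro r hr
    have hw := (hg r hr).add ((hf r hr).div ((hasDerivAt_id r).const_mul 2) (by simpa using hr.ne'))
    have hq := ((hasDerivAt_const r (1:ℝ)).div (((hasDerivAt_id r).pow 2).const_mul 4)
      (by simpa using hr.ne')).const_add 1
    have h := (hasDerivAt_id r).mul ((hw.pow 2).add (hq.mul ((hf r hr).pow 2)))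
    refine h.congr_deriv ?_
    simp
    field_simp
    ring
  have hanti : AntitoneOn E (Ici (1/2)) := by
    apply antitoneOn_of_deriv_nonpos (convex_Ici _)
    · intro r hr
      have : 0 < r := by have := mem_Ici.1 hr; linarith
      exact (hder r this).continuousAt.continuousWithinAt
    · intro r hr
      rw [interior_Ici, mem_Ioi] at hr
      exact (hder r (by linarith)).differentiableAt.differentiableWithinAt
    · intro r hr
      rw [interior_Ici, mem_Ioi] at hr
      rw [(hder r (by linarith)).deriv]
      have : 0 ≤ (1 / (2 * r ^ 2)) * f r ^ 2 := by positivity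
      linarith
  have h1 := hanti (mem_Ici.2 le_rfl) (mem_Ici.2 hr) hr
  have hr0 : 0 < r := by linarith
  have h2 : f r ^ 2 * r ≤ E r := by
    simp only [hE]
    have : 0 ≤ r * ((g r + f r / (2 * r)) ^ 2 + (1 / (4 * r ^ 2)) * f r ^ 2) := by positivity
    linarith
  have h3 : E (1/2) ≤ 2 := by
    simp only [hE]
    have := hfg (1/2) (by norm_num)
    norm_num at this ⊢
    nlinarith [sq_nonneg (g 2⁻¹ - f 2⁻¹), sq_nonneg (g (1/2) - f (1/2))]
  linarith

/-- decay from the Bessel equation, the case `n ≥ 2`. -/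
lemma bessel_decay_two (n : ℕ) (hn : 2 ≤ n) (f g : ℝ → ℝ) (hf : ∀ r, 0 < r → HasDerivAt f (g r) r)
    (hg : ∀ r, 0 < r → HasDerivAt g (- f r - n / r * g r) r)
    (hfg : ∀ r, 0 < r → f r ^ 2 + g r ^ 2 ≤ 1) (r : ℝ) (hr : (n:ℝ) / 2 ≤ r) :
    f r ^ 2 * r ^ n ≤ (n + 1) * ((n:ℝ) / 2) ^ n := by
  have hn' : (2:ℝ) ≤ n := by exact_mod_cast hn
  set m : ℝ := (n:ℝ) / 2 * ((n:ℝ) / 2 - 1) with hm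
  have hm0 : 0 ≤ m := by
    have : 0 ≤ (n:ℝ) / 2 - 1 := by linarith
    positivity
  set q : ℝ → ℝ := fun r => 1 - m / r ^ 2 with hq
  set w : ℝ → ℝ := fun r => g r + (n:ℝ) / (2 * r) * f r with hw
  set E : ℝ → ℝ := fun r => r ^ n * (w r ^ 2 / q r + f r ^ 2) with hE
  have hqpos : ∀ r, (n:ℝ) / 2 ≤ r → 0 < q r := by
    intro r hr
    have hr0 : 0 < r := by linarith
    simp only [hq]
    rw [sub_pos, div_lt_one (by positivity)]
    nlinarith
  have hwder : ∀ r, 0 < r → HasDerivAt w (-(n / (2 * r)) * w r - q r * f r) r := by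
    intro r hr
    have h := (hg r hr).add (((hasDerivAt_const r (n:ℝ)).div ((hasDerivAt_id r).const_mul 2)
      (by simpa using hr.ne')).mul (hf r hr))
    refine h.congr_deriv ?_
    simp [hw, hq, hm]
    field_simp
    ring
  have hqder : ∀ r, 0 < r → HasDerivAt q (2 * m / r ^ 3) r := by
    intro r hr
    have h := ((hasDerivAt_const r m).div ((hasDerivAt_id r).pow 2) (by simpa using hr.ne')).const_sub 1
    refine h.congr_deriv ?_
    simp
    field_simp
  have hder : ∀ r, (n:ℝ) / 2 ≤ r → HasDerivAt E (- (r ^ n * w r ^ 2 * (2 * m / r ^ 3) / q r ^ 2)) r := by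
    intro r hr
    have hr0 : 0 < r := by linarith
    have hq0 := hqpos r hr
    have h := (hasDerivAt_pow n r).mul ((((hwder r hr0).pow 2).div (hqder r hr0) hq0.ne').add
      ((hf r hr0).pow 2))
    refine h.congr_deriv ?_
    have hp : r ^ n = r * r ^ (n - 1) := by rw [← pow_succ', Nat.sub_add_cancel (by omega)]
    have hgw : g r = w r - (n:ℝ) / (2 * r) * f r := by simp [hw]
    simp only [Pi.add_apply, Pi.pow_apply, Pi.div_apply]
    rw [hgw, hp]
    generalize q r = Q at *
    generalize w r = W at *
    generalize r ^ (n - 1) = P at *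
    simp only [Nat.cast_ofNat, Nat.add_one_sub_one, pow_one]
    field_simp
    ring
  have hanti : AntitoneOn E (Ici ((n:ℝ)/2)) := by
    apply antitoneOn_of_deriv_nonpos (convex_Ici _)
    · intro r hr
      exact (hder r hr).continuousAt.continuousWithinAt
    · intro r hr
      rw [interior_Ici, mem_Ioi] at hr
      exact (hder r hr.le).differentiableAt.differentiableWithinAt
    · intro r hr
      rw [interior_Ici, mem_Ioi] at hr
      rw [(hder r hr.le).deriv]
      have hr0 : 0 < r := by linarith
      have : 0 ≤ (r ^ n * w r ^ 2 * (2 * m / r ^ 3) / q r ^ 2) := by positivity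
      linarith
  have h1 := hanti (mem_Ici.2 le_rfl) (mem_Ici.2 hr) hr
  have hr0 : 0 < r := by linarith
  have h2 : f r ^ 2 * r ^ n ≤ E r := by
    simp only [hE]
    have := hqpos r hr
    have : 0 ≤ r ^ n * (w r ^ 2 / q r) := by positivity
    linarith
  have h3 : E ((n:ℝ)/2) ≤ (n + 1) * ((n:ℝ) / 2) ^ n := by
    simp only [hE]
    have h := hfg ((n:ℝ)/2) (by linarith)
    have hq2 : q ((n:ℝ)/2) = 2 / n := by
      simp only [hq, hm]
      field_simp
      ring
    have hw2 : w ((n:ℝ)/2) = g ((n:ℝ)/2) + f ((n:ℝ)/2) := by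
      simp only [hw]
      field_simp
    rw [hq2, hw2, mul_comm]
    refine mul_le_mul_of_nonneg_right ?_ (by positivity)
    have : (g ((n:ℝ)/2) + f ((n:ℝ)/2)) ^ 2 ≤ 2 := by
      nlinarith [sq_nonneg (g ((n:ℝ)/2) - f ((n:ℝ)/2))]
    have h5 : (g ((n:ℝ)/2) + f ((n:ℝ)/2)) ^ 2 / (2 / (n:ℝ)) ≤ n := by
      rw [div_le_iff₀ (by positivity)]
      field_simp
      linarith
    nlinarith [sq_nonneg (g ((n:ℝ)/2))]
  linarith

lemma sf_decay (d : ℕ) (hd : 2 ≤ d) (e : Euc d) (he : ‖e‖ = 1) (r : ℝ) (hr : ((d:ℝ) - 1) / 2 ≤ r) :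
    sf d e r ^ 2 * r ^ (d - 1) ≤ 2 * d * (((d:ℝ) - 1) / 2) ^ (d - 1) := by
  obtain ⟨n, rfl⟩ : ∃ n, d = n + 1 := ⟨d - 1, by omega⟩
  simp only [Nat.cast_add, Nat.cast_one, add_sub_cancel_right, Nat.add_sub_cancel] at hr ⊢
  have hg := sg_deriv (n+1) hd e he
  simp only [Nat.cast_add, Nat.cast_one, add_sub_cancel_right] at hg
  rcases Nat.lt_or_ge n 2 with h | h
  · obtain rfl : n = 1 := by omega
    have := bessel_decay_one (sf _ e) (sg _ e) (fun r _ => sf_deriv _ hd e he r)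
      (fun r hr => by simpa using hg r hr.ne') (fun r hr => sf_sg_le _ hd e he r hr.le) r
      (by simpa using hr)
    norm_num at this ⊢
    linarith
  · have := bessel_decay_two n h (sf _ e) (sg _ e) (fun r _ => sf_deriv _ hd e he r)
      (fun r hr => hg r hr.ne') (fun r hr => sf_sg_le _ hd e he r hr.le) r hr
    have h2 : 0 ≤ (n + 1) * ((n:ℝ) / 2) ^ n := by positivity
    linarith


lemma fourierM_eq {d : ℕ} (μ : Measure (Euc d)) (ξ : Euc d) : fourierM μ ξ = charFun μ (-ξ) := by
  rw [fourierM, charFun_apply]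
  congr 1
  ext x
  congr 1
  simp [mul_comm]

lemma norm_fourierM {d : ℕ} (μ : Measure (Euc d)) (ξ : Euc d) : ‖fourierM μ ξ‖ = ‖charFun μ ξ‖ := by
  rw [fourierM_eq, charFun_neg, RCLike.norm_conj]

lemma sphereFT_eq (d : ℕ) (ξ : Euc d) : sphereFT d ξ = fourierM (sigE d) ξ := by
  rw [sphereFT, fourierM, sigE, integral_map (by fun_prop) (by fun_prop)]

lemma sphereFT_re (d : ℕ) (hd : 2 ≤ d) (ξ : Euc d) :
    (sphereFT d ξ).re = ∫ x, Real.cos (inner ℝ x ξ) ∂(sigE d) := by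
  have := sigE_prob d hd
  have hi : Integrable (fun x => Complex.exp (-(Complex.I * ((inner ℝ x ξ : ℝ) : ℂ)))) (sigE d) := by
    apply Integrable.of_bound (C := 1) (by fun_prop)
    filter_upwards with x
    rw [Complex.norm_exp]; simp
  rw [sphereFT_eq, fourierM, ← RCLike.re_eq_complex_re, ← integral_re hi]
  congr 1
  ext x
  rw [RCLike.re_eq_complex_re, Complex.exp_re]
  simp

lemma sphereFT_re_abs (d : ℕ) (hd : 2 ≤ d) (ξ : Euc d) : |(sphereFT d ξ).re| ≤ 1 := by
  have := sigE_prob d hd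
  rw [sphereFT_re d hd, ← Real.norm_eq_abs]
  have := norm_integral_le_of_norm_le_const (μ := sigE d) (C := 1)
    (f := fun x => Real.cos (inner ℝ x ξ)) (by
      filter_upwards with x; exact Real.abs_cos_le_one _)
  simpa using this

lemma sphereFT_re_low (d : ℕ) (hd : 2 ≤ d) (ξ : Euc d) (h : ‖ξ‖ ≤ 1 / 4) :
    31 / 32 ≤ (sphereFT d ξ).re := by
  have := sigE_prob d hd
  rw [sphereFT_re d hd]
  have h1 : ∫ x, (31/32 : ℝ) ∂(sigE d) = 31 / 32 := by simp
  rw [← h1]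
  apply integral_mono_ae (integrable_const _) (sig_int d hd _ (by fun_prop))
  filter_upwards [sigE_ae d] with x hx
  have h2 : |inner ℝ x ξ| ≤ 1 / 4 := by
    calc |inner ℝ x ξ| ≤ ‖x‖ * ‖ξ‖ := abs_real_inner_le_norm x ξ
      _ ≤ 1 / 4 := by rw [hx, one_mul]; exact h
  have h3 := Real.one_sub_sq_div_two_le_cos (x := inner ℝ x ξ)
  have h4 : inner ℝ x ξ ^ 2 ≤ (1/4) ^ 2 := sq_le_sq' (by linarith [(abs_le.1 h2).1]) (abs_le.1 h2).2
  show (31/32 : ℝ) ≤ Real.cos (inner ℝ x ξ)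
  linarith

lemma sphereFT_re_decay (d : ℕ) (hd : 2 ≤ d) (ξ : Euc d) (h : ((d:ℝ) - 1) / 2 ≤ ‖ξ‖) :
    |(sphereFT d ξ).re| ≤
      √(2 * d * (((d:ℝ) - 1) / 2) ^ (d - 1)) * ‖ξ‖ ^ (-(((d:ℝ) - 1) / 2)) := by
  have hd' : (2:ℝ) ≤ d := by exact_mod_cast hd
  have hpos : 0 < ‖ξ‖ := by linarith
  set e : Euc d := ‖ξ‖⁻¹ • ξ with he
  have hen : ‖e‖ = 1 := by
    rw [he, norm_smul, norm_inv, norm_norm, inv_mul_cancel₀ hpos.ne']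
  have h1 : (sphereFT d ξ).re = sf d e ‖ξ‖ := by
    rw [sphereFT_re d hd, sf]
    congr 1
    ext x
    rw [he, inner_smul_right, ← mul_assoc, mul_inv_cancel₀ hpos.ne', one_mul]
  rw [h1, Real.rpow_neg hpos.le, ← div_eq_mul_inv, le_div_iff₀ (by positivity)]
  apply Real.le_sqrt_of_sq_le
  rw [mul_pow, sq_abs, ← Real.rpow_natCast (‖ξ‖ ^ _) 2, ← Real.rpow_mul hpos.le]
  have : (((d:ℝ) - 1) / 2) * ((2:ℕ):ℝ) = ((d - 1 : ℕ) : ℝ) := by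
    rw [Nat.cast_sub (by omega)]; push_cast; ring
  rw [this, Real.rpow_natCast]
  exact sf_decay d hd e hen _ h

lemma gauss_integrable (d : ℕ) (ε : ℝ) (hε : 0 < ε) :
    Integrable (fun ξ : Euc d => Real.exp (-ε * ‖ξ‖ ^ 2)) := by
  have h := GaussianFourier.integrable_cexp_neg_mul_sq_norm_add (V := Euc d) (b := (ε : ℂ))
    (by simpa using hε) 0 0
  have := h.norm
  refine this.congr ?_
  filter_upwards with ξ
  rw [Complex.norm_exp]
  congr 1
  simp [← Complex.ofReal_pow]

lemma gauss_charFun {d : ℕ} (ν : Measure (Euc d)) [IsFiniteMeasure ν] (ε : ℝ) (hε : 0 < ε) :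
    ∫ ξ, charFun ν ξ * (Real.exp (-ε * ‖ξ‖ ^ 2) : ℂ) =
      ((∫ x, (Real.pi / ε) ^ ((d:ℝ) / 2) * Real.exp (-(‖x‖ ^ 2 / (4 * ε))) ∂ν : ℝ) : ℂ) := by
  have h1 : ∀ ξ : Euc d, charFun ν ξ * (Real.exp (-ε * ‖ξ‖ ^ 2) : ℂ) =
      ∫ x, Complex.exp (-(ε:ℂ) * ‖ξ‖ ^ 2 + Complex.I * (inner ℝ x ξ : ℝ)) ∂ν := by
    intro ξ
    rw [charFun_apply, ← integral_mul_const]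
    congr 1
    ext x
    rw [Complex.ofReal_exp, ← Complex.exp_add]
    congr 1
    push_cast
    ring
  simp_rw [h1]
  rw [integral_integral_swap]
  · rw [← integral_complex_ofReal]
    congr 1
    ext x
    rw [GaussianFourier.integral_cexp_neg_mul_sq_norm_add (by simpa using hε)]
    rw [Complex.ofReal_mul, Complex.ofReal_exp, Complex.ofReal_cpow (by positivity)]
    simp only [finrank_euclideanSpace, Fintype.card_fin, Complex.I_sq]
    push_cast
    congr 2
    ring
  · have h2 : Integrable (fun p : Euc d × Euc d => Real.exp (-ε * ‖p.1‖ ^ 2)) (volume.prod ν) :=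
      (gauss_integrable d ε hε).comp_fst ν
    refine h2.mono' (by fun_prop) ?_
    filter_upwards with p
    simp only [Function.uncurry]
    rw [Complex.norm_exp]
    simp [← Complex.ofReal_pow]

/-- the difference measure -/
def diffM {d : ℕ} (μ : Measure (Euc d)) : Measure (Euc d) := μ.conv (μ.map ((-1:ℝ) • ·))

instance diffM_fin {d : ℕ} (μ : Measure (Euc d)) [IsProbabilityMeasure μ] :
    IsProbabilityMeasure (diffM μ) := by
  have : IsProbabilityMeasure (μ.map ((-1:ℝ) • ·)) := Measure.isProbabilityMeasure_map (by fun_prop)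
  unfold diffM
  infer_instance

lemma charFun_diffM {d : ℕ} (μ : Measure (Euc d)) [IsProbabilityMeasure μ] (ξ : Euc d) :
    charFun (diffM μ) ξ = ((‖fourierM μ ξ‖ ^ 2 : ℝ) : ℂ) := by
  have : IsProbabilityMeasure (μ.map ((-1:ℝ) • ·)) := Measure.isProbabilityMeasure_map (by fun_prop)
  rw [diffM, charFun_conv, charFun_map_smul, norm_fourierM]
  simp [Complex.mul_conj, Complex.normSq_eq_norm_sq]

lemma diffM_lintegral {d : ℕ} (μ : Measure (Euc d)) [IsProbabilityMeasure μ] (f : Euc d → ℝ≥0∞)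
    (hf : Measurable f) : ∫⁻ z, f z ∂(diffM μ) = ∫⁻ x, ∫⁻ y, f (x - y) ∂μ ∂μ := by
  have : IsProbabilityMeasure (μ.map ((-1:ℝ) • ·)) := Measure.isProbabilityMeasure_map (by fun_prop)
  rw [diffM, Measure.lintegral_conv hf]
  congr 1
  ext x
  rw [lintegral_map (by fun_prop) (by fun_prop)]
  congr 1
  ext y
  congr 1
  simp [sub_eq_add_neg]

lemma energy_eq {d : ℕ} (μ : Measure (Euc d)) [IsProbabilityMeasure μ] (s : ℝ) :
    energy μ s = ∫⁻ z, ‖z‖ₑ ^ (-s) ∂(diffM μ) := by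
  rw [diffM_lintegral _ _ (by fun_prop), energy]
  simp only [edist_eq_enorm_sub]

lemma fourierM_meas {d : ℕ} (μ : Measure (Euc d)) [IsProbabilityMeasure μ] :
    Continuous (fourierM μ) := by
  have : fourierM μ = fun ξ => charFun μ (-ξ) := by ext ξ; exact fourierM_eq μ ξ
  rw [this]
  exact continuous_charFun.comp continuous_neg

lemma fourierM_le {d : ℕ} (μ : Measure (Euc d)) [IsProbabilityMeasure μ] (ξ : Euc d) :
    ‖fourierM μ ξ‖ ≤ 1 := by
  rw [norm_fourierM]; exact norm_charFun_le_one ξ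


lemma gamma_lint (p c : ℝ) (hp : 0 < p) (hc : 0 < c) :
    ∫⁻ τ in Ioi (0:ℝ), ENNReal.ofReal (τ ^ (p - 1) * Real.exp (-(c * τ))) =
      ENNReal.ofReal (c ^ (-p) * Real.Gamma p) := by
  have h := Real.integral_rpow_mul_exp_neg_mul_Ioi hp hc
  have hi : IntegrableOn (fun τ : ℝ => τ ^ (p - 1) * Real.exp (-(c * τ))) (Ioi 0) := by
    have := integrableOn_rpow_mul_exp_neg_mul_rpow (s := p - 1) (p := 1) (b := c)
      (by linarith) one_pos hc
    refine this.congr_fun (fun τ _ => ?_) measurableSet_Ioi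
    simp
  rw [← ofReal_integral_eq_lintegral_ofReal hi, h]
  · rw [one_div, Real.inv_rpow hc.le, Real.rpow_neg hc.le]
  · filter_upwards [ae_restrict_mem measurableSet_Ioi] with τ hτ
    have : 0 < τ := hτ
    simp only [Pi.zero_apply]
    positivity

lemma gamma_lint_inv (q c : ℝ) (hq : 0 < q) (hc : 0 < c) :
    ∫⁻ τ in Ioi (0:ℝ), ENNReal.ofReal (τ ^ (-q - 1) * Real.exp (-(c / τ))) =
      ENNReal.ofReal (c ^ (-q) * Real.Gamma q) := by
  have h := Real.integral_rpow_mul_exp_neg_mul_Ioi hq hc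
  have hi : IntegrableOn (fun τ : ℝ => τ ^ (q - 1) * Real.exp (-(c * τ))) (Ioi 0) := by
    have := integrableOn_rpow_mul_exp_neg_mul_rpow (s := q - 1) (p := 1) (b := c)
      (by linarith) one_pos hc
    refine this.congr_fun (fun τ _ => ?_) measurableSet_Ioi
    simp
  have heq : EqOn (fun x : ℝ => (|(-1:ℝ)| * x ^ ((-1:ℝ) - 1)) •
      ((x ^ (-1:ℝ)) ^ (q - 1) * Real.exp (-(c * x ^ (-1:ℝ)))))
      (fun τ => τ ^ (-q - 1) * Real.exp (-(c / τ))) (Ioi 0) := by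
    intro x hx
    have hx : 0 < x := hx
    simp only [smul_eq_mul, abs_neg, abs_one, one_mul]
    rw [← Real.rpow_mul hx.le, ← mul_assoc, ← Real.rpow_add hx, Real.rpow_neg_one, div_eq_mul_inv]
    congr 2
    ring
  have hi2 : IntegrableOn (fun τ : ℝ => τ ^ (-q - 1) * Real.exp (-(c / τ))) (Ioi 0) := by
    have := (integrableOn_Ioi_comp_rpow_iff (fun τ : ℝ => τ ^ (q - 1) * Real.exp (-(c * τ)))
      (p := -1) (by norm_num)).2 hi
    exact this.congr_fun heq measurableSet_Ioi
  have h2 : ∫ τ in Ioi (0:ℝ), τ ^ (-q - 1) * Real.exp (-(c / τ)) = (1 / c) ^ q * Real.Gamma q := by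
    rw [← h, ← integral_comp_rpow_Ioi (fun τ : ℝ => τ ^ (q - 1) * Real.exp (-(c * τ)))
      (p := -1) (by norm_num)]
    exact (setIntegral_congr_fun measurableSet_Ioi heq).symm
  rw [← ofReal_integral_eq_lintegral_ofReal hi2, h2]
  · rw [one_div, Real.inv_rpow hc.le, Real.rpow_neg hc.le]
  · filter_upwards [ae_restrict_mem measurableSet_Ioi] with τ hτ
    have : 0 < τ := hτ
    simp only [Pi.zero_apply]
    positivity

lemma gauss_lint {d : ℕ} (μ : Measure (Euc d)) [IsProbabilityMeasure μ] (τ : ℝ) (hτ : 0 < τ) :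
    ∫⁻ ξ, ENNReal.ofReal (‖fourierM μ ξ‖ ^ 2 * Real.exp (-(‖ξ‖ ^ 2 * τ))) =
      ∫⁻ z, ENNReal.ofReal ((Real.pi / τ) ^ ((d:ℝ) / 2) * Real.exp (-(‖z‖ ^ 2 / (4 * τ))))
        ∂(diffM μ) := by
  have hc := (fourierM_meas μ)
  have h := gauss_charFun (diffM μ) τ hτ
  simp_rw [charFun_diffM, ← Complex.ofReal_mul] at h
  rw [integral_complex_ofReal, Complex.ofReal_inj] at h
  have heq : (fun ξ : Euc d => ‖fourierM μ ξ‖ ^ 2 * Real.exp (-τ * ‖ξ‖ ^ 2)) =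
      fun ξ => ‖fourierM μ ξ‖ ^ 2 * Real.exp (-(‖ξ‖ ^ 2 * τ)) := by
    ext ξ; congr 2; ring
  rw [heq] at h
  rw [← ofReal_integral_eq_lintegral_ofReal, h, ofReal_integral_eq_lintegral_ofReal]
  · apply Integrable.of_bound (C := (Real.pi / τ) ^ ((d:ℝ) / 2)) (by fun_prop)
    filter_upwards with z
    rw [norm_mul, Real.norm_eq_abs, Real.norm_eq_abs, abs_of_nonneg (by positivity), Real.abs_exp]
    apply mul_le_of_le_one_right (by positivity)
    rw [Real.exp_le_one_iff]
    have : 0 ≤ ‖z‖ ^ 2 / (4 * τ) := by positivity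
    linarith
  · filter_upwards with z
    simp only [Pi.zero_apply]
    positivity
  · rw [← heq]
    refine (gauss_integrable d τ hτ).mono' (by fun_prop) ?_
    filter_upwards with z
    rw [norm_mul, norm_pow, norm_norm, Real.norm_eq_abs, Real.abs_exp]
    apply mul_le_of_le_one_left (by positivity)
    exact pow_le_one₀ (norm_nonneg _) (fourierM_le μ z)
  · filter_upwards with z
    simp only [Pi.zero_apply]
    positivity

lemma energy_fourier {d : ℕ} (hd : 2 ≤ d) (μ : Measure (Euc d)) [IsProbabilityMeasure μ] (s : ℝ)
    (hs0 : 0 < s) (hsd : s < d) :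
    ∫⁻ ξ, ENNReal.ofReal (‖fourierM μ ξ‖ ^ 2 * ‖ξ‖ ^ (s - d)) ≤
      ENNReal.ofReal (Real.pi ^ ((d:ℝ) / 2) * 2 ^ s *
        (Real.Gamma (s / 2) / Real.Gamma ((d - s) / 2))) * energy μ s := by
  have hc := (fourierM_meas μ).measurable
  set p : ℝ := (d - s) / 2 with hp
  have hp0 : 0 < p := by rw [hp]; linarith
  have hG : 0 < Real.Gamma p := Real.Gamma_pos_of_pos hp0
  have hG2 : 0 < Real.Gamma (s/2) := Real.Gamma_pos_of_pos (by linarith)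
  have h1 : ENNReal.ofReal (Real.Gamma p) *
      ∫⁻ ξ, ENNReal.ofReal (‖fourierM μ ξ‖ ^ 2 * ‖ξ‖ ^ (s - d)) =
      ∫⁻ ξ, ∫⁻ τ in Ioi (0:ℝ), ENNReal.ofReal (τ ^ (p - 1)) *
        ENNReal.ofReal (‖fourierM μ ξ‖ ^ 2 * Real.exp (-(‖ξ‖ ^ 2 * τ))) := by
    rw [← lintegral_const_mul _ (by fun_prop)]
    apply lintegral_congr_ae
    have hne : ∀ᵐ ξ : Euc d, ξ ≠ 0 := by
      have : Nontrivial (Fin d) := Fin.nontrivial_iff_two_le.2 hd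
      have : Nonempty (Fin d) := ⟨⟨0, by omega⟩⟩
      exact (volume : Measure (Euc d)).ae_ne 0
    filter_upwards [hne] with ξ hξ
    have hpos : 0 < ‖ξ‖ := norm_pos_iff.2 hξ
    have := gamma_lint p (‖ξ‖ ^ 2) hp0 (by positivity)
    rw [← ENNReal.ofReal_mul hG.le]
    have h3 : Real.Gamma p * (‖fourierM μ ξ‖ ^ 2 * ‖ξ‖ ^ (s - d)) =
      ‖fourierM μ ξ‖ ^ 2 * ((‖ξ‖ ^ 2) ^ (-p) * Real.Gamma p) := by
      rw [← Real.rpow_natCast ‖ξ‖ 2, ← Real.rpow_mul hpos.le]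
      have : ((2:ℕ):ℝ) * -p = s - d := by rw [hp]; push_cast; ring
      rw [this]; ring
    rw [h3, ENNReal.ofReal_mul (by positivity), ← this, ← lintegral_const_mul _ (by fun_prop)]
    apply setLIntegral_congr_fun measurableSet_Ioi
    intro τ hτ
    have hτ : 0 < τ := hτ
    simp only
    rw [← ENNReal.ofReal_mul (by positivity), ← ENNReal.ofReal_mul (by positivity)]
    congr 1; ring
  have h2 : (∫⁻ ξ, ∫⁻ τ in Ioi (0:ℝ), ENNReal.ofReal (τ ^ (p - 1)) *
        ENNReal.ofReal (‖fourierM μ ξ‖ ^ 2 * Real.exp (-(‖ξ‖ ^ 2 * τ)))) =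
      ∫⁻ z, (∫⁻ τ in Ioi (0:ℝ), ENNReal.ofReal (τ ^ (p - 1)) *
        ENNReal.ofReal ((Real.pi / τ) ^ ((d:ℝ) / 2) * Real.exp (-(‖z‖ ^ 2 / (4 * τ)))))
        ∂(diffM μ) := by
    rw [lintegral_lintegral_swap (by fun_prop)]
    refine Eq.trans ?_ (lintegral_lintegral_swap (by fun_prop)).symm
    apply setLIntegral_congr_fun measurableSet_Ioi
    intro τ hτ
    simp only
    rw [lintegral_const_mul _ (by fun_prop), lintegral_const_mul _ (by fun_prop), gauss_lint μ τ hτ]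
  have h3 : ∀ z : Euc d, ∫⁻ τ in Ioi (0:ℝ), ENNReal.ofReal (τ ^ (p - 1)) *
        ENNReal.ofReal ((Real.pi / τ) ^ ((d:ℝ) / 2) * Real.exp (-(‖z‖ ^ 2 / (4 * τ)))) ≤
        ENNReal.ofReal (Real.pi ^ ((d:ℝ) / 2) * 2 ^ s * Real.Gamma (s / 2)) * ‖z‖ₑ ^ (-s) := by
    intro z
    by_cases hz : z = 0
    · subst hz
      have h4 : (‖(0 : Euc d)‖ₑ ^ (-s) : ℝ≥0∞) = ⊤ := by
        rw [enorm_zero, ENNReal.zero_rpow_of_neg (by linarith)]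
      rw [h4, ENNReal.mul_top]
      · exact le_top
      · have : 0 < Real.pi ^ ((d:ℝ) / 2) * 2 ^ s * Real.Gamma (s / 2) := by positivity
        simpa using this
    · have hpos : 0 < ‖z‖ := norm_pos_iff.2 hz
      have h5 := gamma_lint_inv (s/2) (‖z‖ ^ 2 / 4) (by linarith) (by positivity)
      have h6 : ∫⁻ τ in Ioi (0:ℝ), ENNReal.ofReal (τ ^ (p - 1)) *
        ENNReal.ofReal ((Real.pi / τ) ^ ((d:ℝ) / 2) * Real.exp (-(‖z‖ ^ 2 / (4 * τ)))) =
        ∫⁻ τ in Ioi (0:ℝ), ENNReal.ofReal (Real.pi ^ ((d:ℝ) / 2)) *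
          ENNReal.ofReal (τ ^ (-(s/2) - 1) * Real.exp (-(‖z‖ ^ 2 / 4 / τ))) := by
        apply setLIntegral_congr_fun measurableSet_Ioi
        intro τ hτ
        have hτ : 0 < τ := hτ
        simp only
        rw [← ENNReal.ofReal_mul (by positivity), ← ENNReal.ofReal_mul (by positivity)]
        congr 1
        rw [Real.div_rpow Real.pi_pos.le hτ.le, div_div]
        have h7 : τ ^ (p - 1) = τ ^ (-(s/2) - 1) * τ ^ ((d:ℝ)/2) := by
          rw [← Real.rpow_add hτ]; congr 1; rw [hp]; ring
        have h8 : 0 < τ ^ ((d:ℝ)/2) := by positivity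
        rw [h7]
        field_simp
      rw [h6, lintegral_const_mul _ (by fun_prop), h5, ← ofReal_norm, ENNReal.ofReal_rpow_of_pos hpos,
        ← ENNReal.ofReal_mul (by positivity), ← ENNReal.ofReal_mul (by positivity)]
      apply le_of_eq
      congr 1
      have h9 : (‖z‖ ^ 2 / 4) ^ (-(s/2)) = 2 ^ s * ‖z‖ ^ (-s) := by
        have : ‖z‖ ^ 2 / 4 = (‖z‖ / 2) ^ (2:ℝ) := by
          rw [Real.rpow_two]; ring
        rw [this, ← Real.rpow_mul (by positivity), Real.div_rpow hpos.le (by norm_num)]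
        have : (2:ℝ) * -(s/2) = -s := by ring
        rw [this, Real.rpow_neg (by norm_num : (0:ℝ) ≤ 2)]
        field_simp
      rw [h9]; ring
  have h4 : ENNReal.ofReal (Real.Gamma p) *
      ∫⁻ ξ, ENNReal.ofReal (‖fourierM μ ξ‖ ^ 2 * ‖ξ‖ ^ (s - d)) ≤
      ENNReal.ofReal (Real.pi ^ ((d:ℝ) / 2) * 2 ^ s * Real.Gamma (s / 2)) * energy μ s := by
    rw [h1, h2, energy_eq, ← lintegral_const_mul _ (by fun_prop)]
    exact lintegral_mono h3
  have h5 : ENNReal.ofReal (Real.pi ^ ((d:ℝ) / 2) * 2 ^ s *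
        (Real.Gamma (s / 2) / Real.Gamma p)) =
      (ENNReal.ofReal (Real.Gamma p))⁻¹ *
      ENNReal.ofReal (Real.pi ^ ((d:ℝ) / 2) * 2 ^ s * Real.Gamma (s / 2)) := by
    rw [← ENNReal.ofReal_inv_of_pos hG, ← ENNReal.ofReal_mul (by positivity)]
    congr 1; field_simp
  rw [h5, mul_assoc]
  have h6 : ENNReal.ofReal (Real.Gamma p) ≠ 0 := by simpa using hG
  calc _ = (ENNReal.ofReal (Real.Gamma p))⁻¹ * (ENNReal.ofReal (Real.Gamma p) *
      ∫⁻ ξ, ENNReal.ofReal (‖fourierM μ ξ‖ ^ 2 * ‖ξ‖ ^ (s - d))) := by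
        rw [← mul_assoc, ENNReal.inv_mul_cancel h6 ENNReal.ofReal_ne_top, one_mul]
    _ ≤ _ := by gcongr


lemma ball_set (d : ℕ) : {ξ : Euc d | ‖ξ‖ ≤ 1} = closedBall 0 1 := by
  ext; simp

lemma ball_mom_rot (d : ℕ) (R : Euc d ≃ₗᵢ[ℝ] Euc d) (e : Euc d) :
    ∫ ξ in closedBall (0 : Euc d) 1, (inner ℝ (R e) ξ : ℝ) ^ 2 =
      ∫ ξ in closedBall (0 : Euc d) 1, (inner ℝ e ξ : ℝ) ^ 2 := by
  have h := R.measurePreserving.setIntegral_preimage_emb R.toHomeomorph.measurableEmbedding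
    (fun ξ => (inner ℝ (R e) ξ : ℝ) ^ 2) (closedBall (0 : Euc d) 1)
  rw [← h]
  have : R ⁻¹' closedBall (0 : Euc d) 1 = closedBall 0 1 := by
    ext; simp
  rw [this]
  simp

lemma ball_mom_unit (d : ℕ) (e : Euc d) (he : ‖e‖ = 1) :
    d * ∫ ξ in closedBall (0 : Euc d) 1, (inner ℝ e ξ : ℝ) ^ 2 ≤
      (volume (ball (0 : Euc d) 1)).toReal := by
  have hint : ∀ v : Euc d, IntegrableOn (fun ξ : Euc d => (inner ℝ v ξ : ℝ) ^ 2) (closedBall 0 1) := by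
    intro v
    exact ContinuousOn.integrableOn_compact (isCompact_closedBall 0 1) (by fun_prop)
  have h1 : ∀ i : Fin d, ∫ ξ in closedBall (0 : Euc d) 1,
      (inner ℝ (EuclideanSpace.basisFun (Fin d) ℝ i) ξ : ℝ) ^ 2 =
      ∫ ξ in closedBall (0 : Euc d) 1, (inner ℝ e ξ : ℝ) ^ 2 := by
    intro i
    have hn : ‖EuclideanSpace.basisFun (Fin d) ℝ i‖ = 1 := by simp
    have := Submodule.reflection_sub (v := e) (w := EuclideanSpace.basisFun (Fin d) ℝ i) (by rw [he, hn])
    rw [← this, ball_mom_rot]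
  have h2 : (d:ℝ) * ∫ ξ in closedBall (0 : Euc d) 1, (inner ℝ e ξ : ℝ) ^ 2 =
      ∫ ξ in closedBall (0 : Euc d) 1, ‖ξ‖ ^ 2 := by
    have : (d:ℝ) * ∫ ξ in closedBall (0 : Euc d) 1, (inner ℝ e ξ : ℝ) ^ 2 =
      ∑ i : Fin d, ∫ ξ in closedBall (0 : Euc d) 1,
      (inner ℝ (EuclideanSpace.basisFun (Fin d) ℝ i) ξ : ℝ) ^ 2 := by
      simp only [h1]; simp
    rw [this, ← integral_finsetSum _ (fun i _ => hint _)]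
    congr 1; ext ξ
    rw [EuclideanSpace.real_norm_sq_eq]
    simp [EuclideanSpace.inner_single_left]
  rw [h2]
  have h3 : ∫ ξ in closedBall (0 : Euc d) 1, ‖ξ‖ ^ 2 ≤ ∫ ξ in closedBall (0 : Euc d) 1, (1:ℝ) := by
    apply setIntegral_mono_on
    · exact ContinuousOn.integrableOn_compact (isCompact_closedBall 0 1) (by fun_prop)
    · exact ContinuousOn.integrableOn_compact (isCompact_closedBall 0 1) (by fun_prop)
    · exact measurableSet_closedBall
    · intro x hx
      have : ‖x‖ ≤ 1 := by simpa using hx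
      exact pow_le_one₀ (norm_nonneg _) this
  refine h3.trans (le_of_eq ?_)
  rw [setIntegral_const, smul_eq_mul, mul_one, Measure.real, Measure.addHaar_unitClosedBall_eq_addHaar_unitBall]

lemma ball_mom (d : ℕ) (hd : 2 ≤ d) (z : Euc d) :
    ∫ ξ in closedBall (0 : Euc d) 1, (inner ℝ z ξ : ℝ) ^ 2 ≤
      ‖z‖ ^ 2 / d * (volume (ball (0 : Euc d) 1)).toReal := by
  have hd' : (0:ℝ) < d := by positivity
  by_cases hz : z = 0
  · subst hz; simp
  have hpos : 0 < ‖z‖ := norm_pos_iff.2 hz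
  have h := ball_mom_unit d (‖z‖⁻¹ • z) (by rw [norm_smul]; simp [hpos.ne'])
  simp only [real_inner_smul_left, mul_pow] at h
  rw [integral_const_mul] at h
  rw [div_mul_eq_mul_div, le_div_iff₀ hd']
  calc _ = ‖z‖ ^ 2 * (d * (‖z‖⁻¹ ^ 2 * ∫ ξ in closedBall (0 : Euc d) 1, (inner ℝ z ξ : ℝ) ^ 2)) := by
        field_simp
    _ ≤ _ := by gcongr

lemma Fmu_one (d : ℕ) (hd : 2 ≤ d) (μ : Measure (Euc d)) [IsProbabilityMeasure μ]
    (hsupp : μ (unitCube d)ᶜ = 0) :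
    3 / 4 * (volume (ball (0 : Euc d) 1)).toReal ≤ FmuInt μ 1 := by
  have hd' : (0:ℝ) < d := by positivity
  set ω := (volume (ball (0 : Euc d) 1)).toReal with hω
  set c : Euc d := WithLp.toLp 2 (fun _ => (1/2 : ℝ)) with hc
  have hx : ∀ᵐ x ∂μ, ‖x - c‖ ^ 2 ≤ d / 4 := by
    have : ∀ᵐ x ∂μ, x ∈ unitCube d := hsupp
    filter_upwards [this] with x hx
    rw [EuclideanSpace.real_norm_sq_eq]
    calc ∑ i, (x - c) i ^ 2 ≤ ∑ i : Fin d, (1/4 : ℝ) := by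
          apply Finset.sum_le_sum
          intro i _
          have h1 := (hx i).1
          have h2 := (hx i).2
          simp only [hc, PiLp.sub_apply]
          nlinarith
      _ = d / 4 := by simp; ring
  -- pointwise lower bound
  have hB : Integrable (fun p : Euc d × Euc d => (inner ℝ (p.1 - c) p.2 : ℝ) ^ 2)
      (μ.prod (volume.restrict (closedBall 0 1))) := by
    have : IsFiniteMeasure ((volume : Measure (Euc d)).restrict (closedBall 0 1)) :=
      ⟨by simpa using measure_closedBall_lt_top⟩
    apply Integrable.of_bound (C := d / 4) (by fun_prop)
    have h1 : ∀ᵐ p ∂(μ.prod ((volume : Measure (Euc d)).restrict (closedBall 0 1))), ‖p.1 - c‖ ^ 2 ≤ d / 4 :=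
      Measure.quasiMeasurePreserving_fst.ae hx
    have h2 : ∀ᵐ p ∂(μ.prod ((volume : Measure (Euc d)).restrict (closedBall 0 1))), ‖p.2‖ ≤ 1 := by
      have h3 : ∀ᵐ y ∂((volume : Measure (Euc d)).restrict (closedBall 0 1)), ‖y‖ ≤ 1 := by
        filter_upwards [ae_restrict_mem measurableSet_closedBall] with y hy
        simpa using hy
      exact Measure.quasiMeasurePreserving_snd.ae h3
    filter_upwards [h1, h2] with p hp1 hp2
    rw [norm_pow, Real.norm_eq_abs]
    have := abs_real_inner_le_norm (p.1 - c) p.2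
    calc _ ≤ (‖p.1 - c‖ * ‖p.2‖) ^ 2 := by gcongr
      _ = ‖p.1 - c‖ ^ 2 * ‖p.2‖ ^ 2 := by ring
      _ ≤ d / 4 * 1 := by
        gcongr
        exact pow_le_one₀ (norm_nonneg _) hp2
      _ = _ := by ring
  have hpt : ∀ ξ : Euc d, 1 - ∫ x, (inner ℝ (x - c) ξ : ℝ) ^ 2 ∂μ ≤ ‖fourierM μ ξ‖ ^ 2 := by
    intro ξ
    have hic : Integrable (fun x => Real.cos (inner ℝ (x - c) ξ)) μ := by
      apply Integrable.of_bound (C := 1) (by fun_prop)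
      filter_upwards with x; exact Real.abs_cos_le_one _
    have hie : Integrable (fun x => Complex.exp (-(Complex.I * ((inner ℝ (x - c) ξ : ℝ) : ℂ)))) μ := by
      apply Integrable.of_bound (C := 1) (by fun_prop)
      filter_upwards with x
      rw [Complex.norm_exp]; simp
    have hi2 : Integrable (fun x => (inner ℝ (x - c) ξ : ℝ) ^ 2) μ := by
      apply Integrable.of_bound (C := d / 4 * ‖ξ‖ ^ 2) (by fun_prop)
      filter_upwards [hx] with x hx
      rw [norm_pow, Real.norm_eq_abs]
      have := abs_real_inner_le_norm (x - c) ξ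
      calc _ ≤ (‖x - c‖ * ‖ξ‖) ^ 2 := by gcongr
        _ = ‖x - c‖ ^ 2 * ‖ξ‖ ^ 2 := by ring
        _ ≤ _ := by gcongr
    set y := ∫ x, Real.cos (inner ℝ (x - c) ξ) ∂μ with hy
    have h1 : ‖fourierM μ ξ‖ = ‖∫ x, Complex.exp (-(Complex.I * ((inner ℝ (x - c) ξ : ℝ) : ℂ))) ∂μ‖ := by
      have : ∀ x, Complex.exp (-(Complex.I * ((inner ℝ (x - c) ξ : ℝ) : ℂ))) =
          Complex.exp (Complex.I * ((inner ℝ c ξ : ℝ) : ℂ)) *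
            Complex.exp (-(Complex.I * ((inner ℝ x ξ : ℝ) : ℂ))) := by
        intro x
        rw [← Complex.exp_add, inner_sub_left]; congr 1; push_cast; ring
      simp_rw [this]
      rw [integral_const_mul, norm_mul, fourierM, Complex.norm_exp]
      simp
    have h2 : y = (∫ x, Complex.exp (-(Complex.I * ((inner ℝ (x - c) ξ : ℝ) : ℂ))) ∂μ).re := by
      have := integral_re hie
      simp only [RCLike.re_to_complex] at this
      rw [← this, hy]
      congr 1; ext x
      rw [Complex.exp_re]; simp
    have h3 : |y| ≤ ‖fourierM μ ξ‖ := by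
      rw [h1, h2]; exact Complex.abs_re_le_norm _
    have h4 : y ^ 2 ≤ ‖fourierM μ ξ‖ ^ 2 := by
      rw [← sq_abs]; gcongr
    have h5 : 1 - (∫ x, (inner ℝ (x - c) ξ : ℝ) ^ 2 ∂μ) / 2 ≤ y := by
      have : 1 - (∫ x, (inner ℝ (x - c) ξ : ℝ) ^ 2 ∂μ) / 2 =
          ∫ x, (1 - (inner ℝ (x - c) ξ : ℝ) ^ 2 / 2) ∂μ := by
        rw [integral_sub (by fun_prop) (hi2.div_const 2), integral_div]; simp
      rw [this, hy]
      apply integral_mono ((integrable_const _).sub (hi2.div_const 2)) hic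
      intro x
      exact Real.one_sub_sq_div_two_le_cos
    nlinarith [sq_nonneg (y - 1)]
  have hfc := fourierM_meas μ
  rw [FmuInt, ball_set]
  have hB2 := hB.integral_prod_right
  calc 3 / 4 * ω = ω - ω / 4 := by ring
    _ ≤ ω - ∫ x, (∫ ξ in closedBall (0 : Euc d) 1, (inner ℝ (x - c) ξ : ℝ) ^ 2) ∂μ := by
        gcongr
        have : ω / 4 = ∫ x, (ω / 4) ∂μ := by simp
        rw [this]
        apply integral_mono_ae hB.integral_prod_left (integrable_const _)
        filter_upwards [hx] with x hx
        refine (ball_mom d hd (x - c)).trans ?_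
        have : ‖x - c‖ ^ 2 / d ≤ 1 / 4 := by
          rw [div_le_iff₀ hd']; linarith
        calc _ ≤ 1 / 4 * ω := by gcongr
          _ = _ := by ring
    _ = ω - ∫ ξ in closedBall (0 : Euc d) 1, (∫ x, (inner ℝ (x - c) ξ : ℝ) ^ 2 ∂μ) := by
        rw [integral_integral_swap hB]
    _ = ∫ ξ in closedBall (0 : Euc d) 1, (1 - ∫ x, (inner ℝ (x - c) ξ : ℝ) ^ 2 ∂μ) := by
        rw [integral_sub _ hB2]
        · rw [setIntegral_const, smul_eq_mul, mul_one, Measure.real,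
            Measure.addHaar_unitClosedBall_eq_addHaar_unitBall]
        · exact ContinuousOn.integrableOn_compact (isCompact_closedBall 0 1) (by fun_prop)
    _ ≤ _ := by
        apply integral_mono _ _ hpt
        · refine Integrable.sub ?_ hB2
          exact ContinuousOn.integrableOn_compact (isCompact_closedBall 0 1) (by fun_prop)
        · exact ContinuousOn.integrableOn_compact (isCompact_closedBall 0 1) (by fun_prop)


lemma gamma_ratio (p θ : ℝ) (hp : 0 < p) (h0 : 0 < θ) (h1 : θ < 1) :
    Real.Gamma (p + θ) ≤ p ^ θ * Real.Gamma p := by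
  have h := Real.Gamma_mul_add_mul_le_rpow_Gamma_mul_rpow_Gamma (s := p) (t := p + 1)
    (a := 1 - θ) (b := θ) hp (by linarith) (by linarith) h0 (by ring)
  have hG := Real.Gamma_pos_of_pos hp
  rw [Real.Gamma_add_one hp.ne', Real.mul_rpow hp.le hG.le] at h
  have e : (1 - θ) * p + θ * (p + 1) = p + θ := by ring
  rw [e] at h
  refine h.trans (le_of_eq ?_)
  calc _ = p ^ θ * (Real.Gamma p ^ (1 - θ) * Real.Gamma p ^ θ) := by ring
    _ = _ := by rw [← Real.rpow_add hG]; simp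

lemma nat_ineq (d : ℕ) : d ^ 2 * 4 ^ d ≤ 25 * 5 ^ d := by
  rcases le_total d 9 with h | h
  · interval_cases d <;> norm_num
  · induction d, h using Nat.le_induction with
    | base => norm_num
    | succ n hn ih =>
      have h1 : (n + 1) ^ 2 * 4 ≤ 5 * n ^ 2 := by nlinarith
      calc (n + 1) ^ 2 * 4 ^ (n + 1) = ((n + 1) ^ 2 * 4) * 4 ^ n := by ring
        _ ≤ (5 * n ^ 2) * 4 ^ n := by gcongr
        _ = 5 * (n ^ 2 * 4 ^ n) := by ring
        _ ≤ 5 * (25 * 5 ^ n) := by gcongr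
        _ = _ := by ring

lemma pi_ineq (d : ℕ) : (d:ℝ) * Real.pi ^ ((d:ℝ) / 2) ≤ 5 * 2 ^ d := by
  have h1 : ((d:ℝ) ^ 2 * 4 ^ d) ≤ 25 * 5 ^ d := by exact_mod_cast nat_ineq d
  refine (pow_le_pow_iff_left₀ (by positivity) (by positivity) two_ne_zero).1 ?_
  have h2 : (Real.pi ^ ((d:ℝ) / 2)) ^ 2 = Real.pi ^ d := by
    rw [← Real.rpow_natCast, ← Real.rpow_mul Real.pi_pos.le, ← Real.rpow_natCast]
    congr 1; push_cast; ring
  rw [mul_pow, h2, mul_pow]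
  have h3 : Real.pi ≤ 16 / 5 := by linarith [Real.pi_lt_d2]
  calc (d:ℝ) ^ 2 * Real.pi ^ d ≤ (d:ℝ) ^ 2 * (16 / 5) ^ d := by gcongr
    _ = ((d:ℝ) ^ 2 * 4 ^ d) * (4 / 5) ^ d := by
      rw [mul_assoc, ← mul_pow]; norm_num
    _ ≤ (25 * 5 ^ d) * (4 / 5) ^ d := by gcongr
    _ = 25 * 4 ^ d := by rw [mul_assoc, ← mul_pow]; norm_num
    _ = _ := by rw [← pow_mul, mul_comm d 2, pow_mul]; norm_num

lemma num_ineq (d : ℕ) (hd : 2 ≤ d) (α : ℝ) (h0 : 0 < α) (h1 : α ≤ 1 / 8) (s : ℝ)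
    (hs : s = ((d:ℝ) + 1) / 2 + α) :
    √(2 * d * (((d:ℝ) - 1) / 2) ^ (d - 1)) * (Real.pi ^ ((d:ℝ) / 2) * 2 ^ s *
        (Real.Gamma (s / 2) / Real.Gamma ((d - s) / 2))) + 2 ≤
      31 / 32 * (3 / 4) * (2 ^ (d + 4) * (d : ℝ) ^ ((d : ℝ) / 2)) := by
  have hd' : (2:ℝ) ≤ d := by exact_mod_cast hd
  have hratio : Real.Gamma (s / 2) / Real.Gamma ((d - s) / 2) ≤ d / 2 := by
    have hp : 0 < ((d:ℝ) - s) / 2 := by rw [hs]; linarith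
    have hG := Real.Gamma_pos_of_pos hp
    rw [div_le_iff₀ hG]
    have := gamma_ratio (((d:ℝ) - s) / 2) (1 / 2 + α) hp (by linarith) (by linarith)
    have e : ((d:ℝ) - s) / 2 + (1 / 2 + α) = s / 2 := by rw [hs]; ring
    rw [e] at this
    refine this.trans ?_
    gcongr
    calc (((d:ℝ) - s) / 2) ^ (1 / 2 + α) ≤ ((d:ℝ) / 2) ^ (1 / 2 + α) := by
          apply Real.rpow_le_rpow hp.le _ (by linarith)
          rw [hs]; linarith
      _ ≤ ((d:ℝ) / 2) ^ (1:ℝ) := by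
          apply Real.rpow_le_rpow_of_exponent_le <;> linarith
      _ = _ := Real.rpow_one _
  have hC1 : √(2 * d * (((d:ℝ) - 1) / 2) ^ (d - 1)) ≤ 2 * ((d:ℝ) / 2) ^ ((d:ℝ) / 2) := by
    rw [Real.sqrt_le_left (by positivity)]
    have e1 : (((d:ℝ) / 2) ^ ((d:ℝ) / 2)) ^ 2 = ((d:ℝ) / 2) ^ d := by
      rw [← Real.rpow_natCast, ← Real.rpow_mul (by positivity), ← Real.rpow_natCast]
      congr 1; push_cast; ring
    have e2 : ((d:ℝ) / 2) ^ d = ((d:ℝ) / 2) ^ (d - 1) * ((d:ℝ) / 2) := by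
      rw [← pow_succ]; congr 1; omega
    rw [mul_pow, e1, e2]
    calc 2 * (d:ℝ) * (((d:ℝ) - 1) / 2) ^ (d - 1) ≤ 2 * (d:ℝ) * ((d:ℝ) / 2) ^ (d - 1) := by
          have : ((d:ℝ) - 1) / 2 ≤ (d:ℝ) / 2 := by linarith
          have : 0 ≤ ((d:ℝ) - 1) / 2 := by linarith
          gcongr
      _ = _ := by ring
  have h2s : (2:ℝ) ^ s ≤ 2 * 2 ^ ((d:ℝ) / 2) := by
    calc (2:ℝ) ^ s ≤ 2 ^ (1 + (d:ℝ) / 2) := by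
          apply Real.rpow_le_rpow_of_exponent_le (by norm_num)
          rw [hs]; linarith
      _ = _ := by rw [Real.rpow_add (by norm_num)]; simp
  have h22 : ((d:ℝ) / 2) ^ ((d:ℝ) / 2) * 2 ^ ((d:ℝ) / 2) = (d:ℝ) ^ ((d:ℝ) / 2) := by
    rw [← Real.mul_rpow (by positivity) (by positivity)]; congr 1; ring
  have hG1 : 0 ≤ Real.Gamma (s / 2) / Real.Gamma ((d - s) / 2) := by
    have a1 := Real.Gamma_pos_of_pos (s := s / 2) (by rw [hs]; linarith)
    have a2 := Real.Gamma_pos_of_pos (s := ((d:ℝ) - s) / 2) (by rw [hs]; linarith)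
    positivity
  set D := (d:ℝ) ^ ((d:ℝ) / 2) with hD
  have hD2 : 2 ≤ D := by
    calc (2:ℝ) ≤ d := hd'
      _ = (d:ℝ) ^ (1:ℝ) := (Real.rpow_one _).symm
      _ ≤ _ := by apply Real.rpow_le_rpow_of_exponent_le <;> linarith
  have h2d : (4:ℝ) ≤ 2 ^ d := by
    calc (4:ℝ) = 2 ^ 2 := by norm_num
      _ ≤ _ := pow_le_pow_right₀ (by norm_num) hd
  have hmain : √(2 * d * (((d:ℝ) - 1) / 2) ^ (d - 1)) * (Real.pi ^ ((d:ℝ) / 2) * 2 ^ s *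
        (Real.Gamma (s / 2) / Real.Gamma ((d - s) / 2))) ≤ 10 * 2 ^ d * D := by
    calc _ ≤ (2 * ((d:ℝ) / 2) ^ ((d:ℝ) / 2)) * (Real.pi ^ ((d:ℝ) / 2) * (2 * 2 ^ ((d:ℝ) / 2)) *
        (d / 2)) := by gcongr
      _ = 2 * (d * Real.pi ^ ((d:ℝ) / 2)) * (((d:ℝ) / 2) ^ ((d:ℝ) / 2) * 2 ^ ((d:ℝ) / 2)) := by ring
      _ = 2 * (d * Real.pi ^ ((d:ℝ) / 2)) * D := by rw [h22]
      _ ≤ 2 * (5 * 2 ^ d) * D := by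
          have := pi_ineq d
          have hD0 : 0 ≤ D := by linarith
          exact mul_le_mul_of_nonneg_right (by linarith) hD0
      _ = _ := by ring
  have : (2:ℝ) ^ (d + 4) = 16 * 2 ^ d := by rw [pow_add]; ring
  rw [this]
  nlinarith [mul_le_mul h2d hD2 (by norm_num) (by positivity)]


lemma sphereFT_cont (d : ℕ) (hd : 2 ≤ d) : Continuous (sphereFT d) := by
  have := sigE_prob d hd
  have h : sphereFT d = fourierM (sigE d) := by ext ξ; exact sphereFT_eq d ξ
  rw [h]; exact fourierM_meas _

lemma cdConst_pos (d : ℕ) (hd : 2 ≤ d) : 0 < cdConst d := by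
  have hd' : (0:ℝ) < d := by positivity
  have h : 0 < (volume (ball (0 : Euc d) 1)).toReal :=
    ENNReal.toReal_pos (measure_ball_pos _ _ one_pos).ne' measure_ball_lt_top.ne
  rw [cdConst]; positivity

lemma tail_decay (d : ℕ) (hd : 2 ≤ d) (α N a t : ℝ)
    (hα0 : 0 < α) (hα : α ≤ 1/8) (ha : a ∈ Ioo (0:ℝ) (1/4))
    (hNα : ((d : ℝ) - 1) / 2 < N * α) (hat : a ≤ t) (ξ : Euc d) (hξ : a ^ (-N) < ‖ξ‖) :
    |(sphereFT d (t • ξ)).re| ≤ √(2 * d * (((d:ℝ) - 1) / 2) ^ (d - 1)) *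
      a ^ (N * α - ((d : ℝ) - 1) / 2) * ‖ξ‖ ^ (((d : ℝ) + 1) / 2 + α - d) := by
  have hd' : (2:ℝ) ≤ d := by exact_mod_cast hd
  obtain ⟨ha0, ha1⟩ := ha
  have hM : 0 < a ^ (-N) := by positivity
  have hξ0 : 0 < ‖ξ‖ := hM.trans hξ
  have hN4 : 4 * ((d:ℝ) - 1) < N := by
    by_contra hcon
    push Not at hcon
    nlinarith
  set k : ℝ := ((d:ℝ) - 1) / 2 with hk
  have hk0 : 0 < k := by rw [hk]; linarith
  have hn : ‖t • ξ‖ = t * ‖ξ‖ := by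
    rw [norm_smul, Real.norm_eq_abs, abs_of_nonneg (by linarith)]
  have haξ : a * ‖ξ‖ ≤ t * ‖ξ‖ := by gcongr
  have h1 : k ≤ a * ‖ξ‖ := by
    have b1 : N ≤ (4:ℝ) ^ (N - 1) := by
      have := one_add_mul_self_le_rpow_one_add (s := 3) (by norm_num) (p := N - 1) (by linarith)
      norm_num at this
      linarith
    have b2 : (4:ℝ) ^ (N - 1) ≤ a ^ (1 - N) := by
      have : (1:ℝ) - N = -(N - 1) := by ring
      rw [this, Real.rpow_neg ha0.le, ← Real.inv_rpow ha0.le]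
      apply Real.rpow_le_rpow (by norm_num) _ (by linarith)
      rw [le_inv_comm₀ (by norm_num) ha0]
      linarith
    have b3 : a ^ (1 - N) = a * a ^ (-N) := by
      rw [sub_eq_add_neg, Real.rpow_add ha0, Real.rpow_one]
    have b4 : a * a ^ (-N) ≤ a * ‖ξ‖ := by gcongr
    rw [hk]; linarith
  have h2 := sphereFT_re_decay d hd (t • ξ) (by rw [hn]; linarith)
  refine h2.trans ?_
  rw [mul_assoc (√_)]
  apply mul_le_mul_of_nonneg_left _ (Real.sqrt_nonneg _)
  rw [← hk, hn]
  have c1 : ‖ξ‖ ^ (-α) ≤ a ^ (N * α) := by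
    have : a ^ (N * α) = (a ^ (-N)) ^ (-α) := by
      rw [← Real.rpow_mul ha0.le]; congr 1; ring
    rw [this]
    exact Real.rpow_le_rpow_of_nonpos hM hξ.le (by linarith)
  calc (t * ‖ξ‖) ^ (-k) ≤ (a * ‖ξ‖) ^ (-k) :=
        Real.rpow_le_rpow_of_nonpos (by positivity) haξ (by linarith)
    _ = a ^ (-k) * ‖ξ‖ ^ (-k) := Real.mul_rpow ha0.le hξ0.le
    _ = a ^ (-k) * (‖ξ‖ ^ (-α) * ‖ξ‖ ^ (((d : ℝ) + 1) / 2 + α - d)) := by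
        rw [← Real.rpow_add hξ0]; congr 2; rw [hk]; ring
    _ ≤ a ^ (-k) * (a ^ (N * α) * ‖ξ‖ ^ (((d : ℝ) + 1) / 2 + α - d)) := by gcongr
    _ = _ := by rw [sub_eq_add_neg (N * α) k, Real.rpow_add ha0]; ring

lemma main_ineq (d : ℕ) (hd : 2 ≤ d)
    (C₀ α N a b δ : ℝ) (hC₀ : 1 ≤ C₀)
    (hα0 : 0 < α) (hα : α ≤ 1/8) (hN : 1 < N)
    (ha : a ∈ Ioo (0:ℝ) (1/4)) (hb : b ∈ Ioo (0:ℝ) (1/4)) (hδ : δ ∈ Ioo (0:ℝ) (1/4))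
    (hNα : ((d : ℝ) - 1) / 2 < N * α) (hbδ : 2 * b ≤ δ)
    (hab : a < b) (hbcd : b ≤ cdConst d)
    (hC₀b : C₀ * b ^ (N * α - ((d : ℝ) - 1) / 2) < cdConst d)
    (μ : Measure (Euc d)) [IsProbabilityMeasure μ]
    (hsupp : μ (unitCube d)ᶜ = 0)
    (hen : energy μ (((d : ℝ) + 1) / 2 + α) ≤ ENNReal.ofReal C₀)
    (hgap : FmuInt μ (a ^ (-N)) - FmuInt μ (δ / b) ≤ a) (t : ℝ) (ht : t ∈ Icc a b) :
    Integrable (fun ξ : Euc d => ‖fourierM μ ξ‖ ^ 2 * (sphereFT d (t • ξ)).re) ∧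
      cdConst d ≤ ∫ ξ : Euc d, ‖fourierM μ ξ‖ ^ 2 * (sphereFT d (t • ξ)).re := by
  have hd' : (2:ℝ) ≤ d := by exact_mod_cast hd
  have hcont := fourierM_meas μ
  have hscont := sphereFT_cont d hd
  have hcd := cdConst_pos d hd
  obtain ⟨ha0, ha1⟩ := ha
  obtain ⟨hb0, hb1⟩ := hb
  obtain ⟨hδ0, hδ1⟩ := hδ
  set s : ℝ := ((d : ℝ) + 1) / 2 + α with hs
  have hnum := num_ineq d hd α hα0 hα s hs
  set C1 : ℝ := √(2 * d * (((d:ℝ) - 1) / 2) ^ (d - 1)) with hC1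
  set C2 : ℝ := Real.pi ^ ((d:ℝ) / 2) * 2 ^ s *
        (Real.Gamma (s / 2) / Real.Gamma ((d - s) / 2)) with hC2
  have hC10 : 0 ≤ C1 := Real.sqrt_nonneg _
  have hC20 : 0 ≤ C2 := by
    have a1 := Real.Gamma_pos_of_pos (s := s / 2) (by rw [hs]; linarith)
    have a2 := Real.Gamma_pos_of_pos (s := ((d:ℝ) - s) / 2) (by rw [hs]; linarith)
    positivity
  set k : ℝ := ((d:ℝ) - 1) / 2 with hk
  set f : Euc d → ℝ := fun ξ => ‖fourierM μ ξ‖ ^ 2 * (sphereFT d (t • ξ)).re with hf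
  set g : Euc d → ℝ := fun ξ => ‖fourierM μ ξ‖ ^ 2 * ‖ξ‖ ^ (s - d) with hg
  have hfc : Continuous f := by rw [hf]; fun_prop
  have hg0 : ∀ ξ, 0 ≤ g ξ := fun ξ => by rw [hg]; positivity
  have hgm : Measurable g := by
    rw [hg]
    have := hcont.measurable
    fun_prop
  have hgl : ∫⁻ ξ, ENNReal.ofReal (g ξ) ≤ ENNReal.ofReal (C2 * C₀) := by
    have h := energy_fourier hd μ s (by rw [hs]; linarith) (by rw [hs]; linarith)
    refine h.trans ?_
    rw [ENNReal.ofReal_mul hC20]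
    gcongr
  have hgi : Integrable g := by
    refine ⟨hgm.aestronglyMeasurable, ?_⟩
    rw [hasFiniteIntegral_iff_ofReal (ae_of_all _ hg0)]
    exact hgl.trans_lt ENNReal.ofReal_lt_top
  have hgint : ∫ ξ, g ξ ≤ C2 * C₀ := by
    rw [integral_eq_lintegral_of_nonneg_ae (ae_of_all _ hg0) hgm.aestronglyMeasurable]
    exact ENNReal.toReal_le_of_le_ofReal (by positivity) hgl
  set M : ℝ := a ^ (-N) with hM
  set Q : Set (Euc d) := {ξ : Euc d | ‖ξ‖ ≤ M} with hQ
  set P : Set (Euc d) := {ξ : Euc d | ‖ξ‖ ≤ δ / b} with hP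
  have hball : ∀ r : ℝ, {ξ : Euc d | ‖ξ‖ ≤ r} = closedBall 0 r := by
    intro r; ext; simp
  have hcomp : ∀ r : ℝ, IsCompact {ξ : Euc d | ‖ξ‖ ≤ r} := by
    intro r; rw [hball]; exact isCompact_closedBall 0 r
  have hQm : MeasurableSet Q := (hcomp M).measurableSet
  have hPm : MeasurableSet P := (hcomp (δ / b)).measurableSet
  have hδb : δ / b ≤ M := by
    have h1 : δ / b ≤ a⁻¹ := by
      rw [div_le_iff₀ hb0, inv_mul_eq_div, le_div_iff₀ ha0]
      nlinarith
    have h2 : a⁻¹ ≤ a ^ (-N) := by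
      rw [← Real.rpow_neg_one]
      exact Real.rpow_le_rpow_of_exponent_ge ha0 (by linarith) (by linarith)
    exact h1.trans h2
  have hPQ : P ⊆ Q := fun ξ hξ => le_trans hξ hδb
  set K : ℝ := C1 * a ^ (N * α - k) with hK
  have hK0 : 0 ≤ K := by positivity
  have htail : ∀ ξ ∈ Qᶜ, |f ξ| ≤ K * g ξ := by
    intro ξ hξ
    have hξ' : a ^ (-N) < ‖ξ‖ := by simpa [hQ] using hξ
    have := tail_decay d hd α N a t hα0 hα ⟨ha0, ha1⟩ hNα ht.1 ξ hξ'
    simp only [hf, hg]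
    rw [abs_mul, abs_of_nonneg (by positivity : (0:ℝ) ≤ ‖fourierM μ ξ‖ ^ 2)]
    calc _ ≤ ‖fourierM μ ξ‖ ^ 2 * (K * ‖ξ‖ ^ (s - d)) := by gcongr
      _ = _ := by ring
  have hfQ : IntegrableOn f Q := hfc.continuousOn.integrableOn_compact (hcomp M)
  have hfQc : IntegrableOn f Qᶜ := by
    refine Integrable.mono' (g := fun ξ => K * g ξ) (hgi.const_mul K).integrableOn
      hfc.aestronglyMeasurable ?_
    filter_upwards [ae_restrict_mem hQm.compl] with ξ hξ
    exact htail ξ hξ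
  have hfi : Integrable f := by
    rw [← integrableOn_univ, ← union_compl_self Q]
    exact hfQ.union hfQc
  refine ⟨hfi, ?_⟩
  set m : Euc d → ℝ := fun ξ => ‖fourierM μ ξ‖ ^ 2 with hm
  have hmc : Continuous m := by rw [hm]; fun_prop
  have hm0 : ∀ ξ, 0 ≤ m ξ := fun ξ => by rw [hm]; positivity
  have hmi : ∀ r : ℝ, IntegrableOn m {ξ : Euc d | ‖ξ‖ ≤ r} := fun r =>
    hmc.continuousOn.integrableOn_compact (hcomp r)
  have hFP : FmuInt μ (δ / b) = ∫ ξ in P, m ξ := rfl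
  have hFQ : FmuInt μ M = ∫ ξ in Q, m ξ := rfl
  have e1 : ∫ ξ, f ξ = (∫ ξ in Q, f ξ) + ∫ ξ in Qᶜ, f ξ := (integral_add_compl hQm hfi).symm
  have e2 : ∫ ξ in Q, f ξ = (∫ ξ in P, f ξ) + ∫ ξ in Q \ P, f ξ := by
    rw [setIntegral_sdiff hPm hfQ hPQ]; ring
  have e3 : ∫ ξ in Q \ P, m ξ = FmuInt μ M - FmuInt μ (δ / b) := by
    rw [setIntegral_sdiff hPm (hmi M) hPQ, hFP, hFQ]
  have i1 : 31 / 32 * FmuInt μ (δ / b) ≤ ∫ ξ in P, f ξ := by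
    rw [hFP, ← integral_const_mul]
    apply setIntegral_mono_on ((hmi _).const_mul _) (hfQ.mono_set hPQ) hPm
    intro ξ hξ
    have hξ' : ‖ξ‖ ≤ δ / b := hξ
    have : ‖t • ξ‖ ≤ 1 / 4 := by
      rw [norm_smul, Real.norm_eq_abs, abs_of_nonneg (by linarith [ht.1])]
      calc t * ‖ξ‖ ≤ b * (δ / b) := by
            have := ht.2
            gcongr
        _ = δ := by field_simp
        _ ≤ _ := hδ1.le
    have := sphereFT_re_low d hd (t • ξ) this
    have h0 := hm0 ξ
    calc 31 / 32 * m ξ = m ξ * (31 / 32) := by ring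
      _ ≤ _ := mul_le_mul_of_nonneg_left this h0
  have i2 : -cdConst d ≤ ∫ ξ in Q \ P, f ξ := by
    have : -∫ ξ in Q \ P, m ξ ≤ ∫ ξ in Q \ P, f ξ := by
      rw [← integral_neg]
      apply setIntegral_mono_on ((hmi M).mono_set sdiff_subset).neg (hfQ.mono_set sdiff_subset)
        (hQm.diff hPm)
      intro ξ _
      have h1 := (abs_le.1 (sphereFT_re_abs d hd (t • ξ))).1
      have h0 := hm0 ξ
      calc -m ξ = m ξ * (-1) := by ring
        _ ≤ _ := mul_le_mul_of_nonneg_left h1 h0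
    linarith
  have i3 : -(C1 * C2 * cdConst d) ≤ ∫ ξ in Qᶜ, f ξ := by
    have h1 : |∫ ξ in Qᶜ, f ξ| ≤ ∫ ξ in Qᶜ, K * g ξ := by
      rw [← Real.norm_eq_abs]
      apply norm_integral_le_of_norm_le (hgi.const_mul K).integrableOn
      filter_upwards [ae_restrict_mem hQm.compl] with ξ hξ
      exact htail ξ hξ
    have h2 : ∫ ξ in Qᶜ, K * g ξ ≤ K * ∫ ξ, g ξ := by
      rw [integral_const_mul]
      exact mul_le_mul_of_nonneg_left (setIntegral_le_integral hgi (ae_of_all _ hg0)) hK0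
    have h3 : a ^ (N * α - k) ≤ b ^ (N * α - k) :=
      Real.rpow_le_rpow ha0.le hab.le (by linarith)
    have h4 : K * ∫ ξ, g ξ ≤ C1 * C2 * cdConst d := by
      calc K * ∫ ξ, g ξ ≤ K * (C2 * C₀) := by gcongr
        _ = C1 * C2 * (C₀ * a ^ (N * α - k)) := by rw [hK]; ring
        _ ≤ C1 * C2 * (C₀ * b ^ (N * α - k)) := by gcongr
        _ ≤ _ := by gcongr
    have := (abs_le.1 (h1.trans (h2.trans h4))).1
    exact this
  have i4 : 3 / 4 * (2 ^ (d + 4) * (d : ℝ) ^ ((d : ℝ) / 2)) * cdConst d ≤ FmuInt μ (δ / b) := by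
    have h1 := Fmu_one d hd μ hsupp
    have h2 : FmuInt μ 1 ≤ FmuInt μ (δ / b) := by
      apply setIntegral_mono_set (hmi _) (ae_of_all _ hm0)
      apply LE.le.eventuallyLE
      intro ξ hξ
      have hξ' : ‖ξ‖ ≤ 1 := hξ
      have : 1 ≤ δ / b := by rw [le_div_iff₀ hb0]; linarith
      exact le_trans hξ' this
    refine le_trans (le_of_eq ?_) (h1.trans h2)
    rw [cdConst]
    have : (0:ℝ) < d := by linarith
    field_simp
  have := mul_le_mul_of_nonneg_right hnum hcd.le
  change cdConst d ≤ ∫ ξ, f ξ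
  rw [e1, e2]
  nlinarith


lemma msupport_eq {d : ℕ} (μ : Measure (Euc d)) : msupport μ = μ.support := by
  ext x
  rw [nhds_basis_ball.mem_measureSupport]
  rfl

lemma unitCube_closed (d : ℕ) : IsClosed (unitCube d) := by
  have : unitCube d = ⋂ i, {x : Euc d | x i ∈ Icc (0:ℝ) 1} := by
    ext x; simp [unitCube]
  rw [this]
  refine isClosed_iInter fun i => ?_
  exact isClosed_Icc.preimage (by fun_prop : Continuous fun x : Euc d => x i)

lemma unitCube_bdd (d : ℕ) : Bornology.IsBounded (unitCube d) := by
  refine (isBounded_closedBall (x := (0 : Euc d)) (r := √d)).subset ?_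
  intro x hx
  rw [mem_closedBall_zero_iff]
  apply Real.le_sqrt_of_sq_le
  rw [EuclideanSpace.real_norm_sq_eq]
  calc ∑ i, x i ^ 2 ≤ ∑ i : Fin d, (1 : ℝ) := by
        apply Finset.sum_le_sum
        intro i _
        exact pow_le_one₀ (hx i).1 (hx i).2
    _ = d := by simp

lemma support_compact {d : ℕ} (μ : Measure (Euc d)) (hsupp : μ (unitCube d)ᶜ = 0) :
    IsCompact (msupport μ) := by
  rw [msupport_eq]
  refine (Metric.isCompact_of_isClosed_isBounded (unitCube_closed d) (unitCube_bdd d)).of_isClosed_subset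
    Measure.isClosed_support ?_
  exact Measure.support_subset_of_isClosed (unitCube_closed d) hsupp

lemma dist_gap {d : ℕ} (S : Set (Euc d)) (hS : IsCompact S) (t : ℝ) (ht : t ∉ distSet S S) :
    ∃ η > 0, ∀ x ∈ S, ∀ y ∈ S, η ≤ |‖x - y‖ - t| := by
  have hc : IsCompact (distSet S S) := by
    have : distSet S S = (fun p : Euc d × Euc d => dist p.1 p.2) '' (S ×ˢ S) := by
      ext r; simp only [distSet, mem_image, Prod.exists, mem_prod]
      constructor
      · rintro ⟨x, hx, y, hy, h⟩; exact ⟨x, y, ⟨hx, hy⟩, h⟩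
      · rintro ⟨x, y, ⟨hx, hy⟩, h⟩; exact ⟨x, hx, y, hy, h⟩
    rw [this]
    exact (hS.prod hS).image (by fun_prop)
  obtain ⟨η, hη, hsub⟩ := Metric.isOpen_iff.1 hc.isClosed.isOpen_compl t ht
  refine ⟨η, hη, fun x hx y hy => ?_⟩
  by_contra hcon
  push Not at hcon
  have : ‖x - y‖ ∈ ball t η := by rw [Metric.mem_ball, Real.dist_eq]; exact hcon
  exact hsub this ⟨x, hx, y, hy, dist_eq_norm x y⟩

lemma nu_ae {d : ℕ} (hd : 2 ≤ d) (μ : Measure (Euc d)) [IsProbabilityMeasure μ] (t η : ℝ)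
    (ht : 0 < t) (h : ∀ x ∈ msupport μ, ∀ y ∈ msupport μ, η ≤ |‖x - y‖ - t|) :
    ∀ᵐ z ∂((diffM μ).conv ((sigE d).map (t • ·))), η ≤ ‖z‖ := by
  have hp := sigE_prob d hd
  have hp2 : IsProbabilityMeasure ((sigE d).map (t • ·)) :=
    Measure.isProbabilityMeasure_map (by fun_prop)
  have hx : ∀ᵐ x ∂μ, x ∈ msupport μ := by
    rw [msupport_eq]; exact Measure.support_mem_ae
  have hw : ∀ᵐ w ∂((sigE d).map (t • ·)), ‖w‖ = t := by
    rw [ae_map_iff (by fun_prop) (measurableSet_eq_fun (by fun_prop) (by fun_prop))]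
    filter_upwards [sigE_ae d] with x hx
    rw [norm_smul, hx, Real.norm_eq_abs, abs_of_pos ht, mul_one]
  set σt := (sigE d).map (t • ·)
  set S : Set (Euc d) := {z | ‖z‖ < η} with hS
  have hSm : MeasurableSet S := measurableSet_lt (by fun_prop) (by fun_prop)
  have hi : Measurable (S.indicator (fun _ => (1:ℝ≥0∞))) := measurable_const.indicator hSm
  have h0 : ((diffM μ).conv σt) S = 0 := by
    rw [← lintegral_indicator_one hSm]
    have h1 : (S.indicator (1 : Euc d → ℝ≥0∞)) = S.indicator (fun _ => (1:ℝ≥0∞)) := rfl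
    rw [h1, Measure.lintegral_conv hi, diffM_lintegral]
    · apply lintegral_eq_zero_of_ae_eq_zero
      filter_upwards [hx] with x hx1
      apply lintegral_eq_zero_of_ae_eq_zero
      filter_upwards [hx] with y hy1
      apply lintegral_eq_zero_of_ae_eq_zero
      filter_upwards [hw] with w hw1
      apply indicator_of_notMem
      have h2 := h x hx1 y hy1
      have h3 := abs_norm_sub_norm_le (x - y) (-w)
      rw [norm_neg, hw1, sub_neg_eq_add] at h3
      simp only [hS, mem_ofPred_eq, not_lt]
      linarith
    · exact Measurable.lintegral_prod_right' (f := fun p : Euc d × Euc d =>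
        S.indicator (fun _ => (1:ℝ≥0∞)) (p.1 + p.2)) (hi.comp (by fun_prop))
  rw [ae_iff]
  convert h0 using 2
  ext z; simp [hS]

lemma dist_concl (d : ℕ) (hd : 2 ≤ d) (μ : Measure (Euc d)) [IsProbabilityMeasure μ]
    (hsupp : μ (unitCube d)ᶜ = 0) (t : ℝ) (ht : 0 < t)
    (hfi : Integrable (fun ξ : Euc d => ‖fourierM μ ξ‖ ^ 2 * (sphereFT d (t • ξ)).re))
    (hpos : 0 < ∫ ξ : Euc d, ‖fourierM μ ξ‖ ^ 2 * (sphereFT d (t • ξ)).re) :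
    t ∈ distSet (msupport μ) (msupport μ) := by
  by_contra hcon
  obtain ⟨η, hη, hgap⟩ := dist_gap _ (support_compact μ hsupp) t hcon
  have hae := nu_ae hd μ t η ht hgap
  have hp := sigE_prob d hd
  have hp2 : IsProbabilityMeasure ((sigE d).map (t • ·)) :=
    Measure.isProbabilityMeasure_map (by fun_prop)
  set ν := (diffM μ).conv ((sigE d).map (t • ·)) with hν
  have hpν : IsProbabilityMeasure ν := by rw [hν]; infer_instance
  set f : Euc d → ℝ := fun ξ => ‖fourierM μ ξ‖ ^ 2 * (sphereFT d (t • ξ)).re with hf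
  have hch : ∀ ξ, (charFun ν ξ).re = f ξ := by
    intro ξ
    rw [hν, charFun_conv, charFun_diffM, charFun_map_smul, Complex.re_ofReal_mul, hf]
    simp only
    rw [sphereFT_eq, fourierM_eq (sigE d), charFun_neg, Complex.conj_re]
  have hbd : ∀ ε : ℝ, 0 < ε → ∫ ξ, f ξ * Real.exp (-ε * ‖ξ‖ ^ 2) ≤
      (Real.pi / ε) ^ ((d:ℝ) / 2) * Real.exp (-(η ^ 2 / (4 * ε))) := by
    intro ε hε
    have h1 := gauss_charFun ν ε hε
    have hint : Integrable (fun ξ : Euc d => charFun ν ξ * (Real.exp (-ε * ‖ξ‖ ^ 2) : ℂ)) := by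
      refine (gauss_integrable d ε hε).mono' ?_ ?_
      · have : Continuous (charFun ν) := continuous_charFun
        apply Continuous.aestronglyMeasurable
        fun_prop
      · filter_upwards with ξ
        rw [norm_mul, Complex.norm_real, Real.norm_eq_abs, Real.abs_exp]
        exact mul_le_of_le_one_left (Real.exp_pos _).le (norm_charFun_le_one ξ)
    have h2 : ∫ ξ, f ξ * Real.exp (-ε * ‖ξ‖ ^ 2) =
        (∫ ξ, charFun ν ξ * (Real.exp (-ε * ‖ξ‖ ^ 2) : ℂ)).re := by
      have := integral_re hint
      simp only [RCLike.re_to_complex] at this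
      rw [← this]
      congr 1; ext ξ
      rw [Complex.re_mul_ofReal, hch]
    rw [h2, h1, Complex.ofReal_re]
    have h3 : (Real.pi / ε) ^ ((d:ℝ) / 2) * Real.exp (-(η ^ 2 / (4 * ε))) =
        ∫ z, (Real.pi / ε) ^ ((d:ℝ) / 2) * Real.exp (-(η ^ 2 / (4 * ε))) ∂ν := by simp
    rw [h3]
    apply integral_mono_of_nonneg
    · filter_upwards with z
      simp only [Pi.zero_apply]; positivity
    · exact integrable_const _
    · filter_upwards [hae] with z hz
      gcongr
  have hlim1 : Tendsto (fun x : ℝ => ∫ ξ, f ξ * Real.exp (-x⁻¹ * ‖ξ‖ ^ 2)) atTop (𝓝 (∫ ξ, f ξ)) := by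
    apply tendsto_integral_filter_of_dominated_convergence (fun ξ => ‖f ξ‖)
    · filter_upwards with x
      exact hfi.aestronglyMeasurable.mul (by fun_prop)
    · filter_upwards [eventually_gt_atTop 0] with x hx
      filter_upwards with ξ
      rw [norm_mul, Real.norm_eq_abs (Real.exp _), Real.abs_exp]
      apply mul_le_of_le_one_right (norm_nonneg _)
      rw [Real.exp_le_one_iff]
      have : 0 ≤ x⁻¹ * ‖ξ‖ ^ 2 := by positivity
      linarith
    · exact hfi.norm
    · filter_upwards with ξ
      have h1 : Tendsto (fun x : ℝ => -x⁻¹ * ‖ξ‖ ^ 2) atTop (𝓝 (-0 * ‖ξ‖ ^ 2)) :=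
        (tendsto_inv_atTop_zero.neg).mul_const _
      have h2 := ((Real.continuous_exp.tendsto _).comp h1).const_mul (f ξ)
      simpa using h2
  have hlim2 : Tendsto (fun x : ℝ => Real.pi ^ ((d:ℝ) / 2) *
      (x ^ ((d:ℝ) / 2) * Real.exp (-(η ^ 2 / 4) * x))) atTop (𝓝 0) := by
    have := (tendsto_rpow_mul_exp_neg_mul_atTop_nhds_zero ((d:ℝ) / 2) (η ^ 2 / 4)
      (by positivity)).const_mul (Real.pi ^ ((d:ℝ) / 2))
    simpa using this
  have hle : ∫ ξ, f ξ ≤ 0 := by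
    apply le_of_tendsto_of_tendsto hlim1 hlim2
    filter_upwards [eventually_gt_atTop 0] with x hx
    refine (hbd x⁻¹ (by positivity)).trans (le_of_eq ?_)
    rw [div_inv_eq_mul, Real.mul_rpow Real.pi_pos.le hx.le, mul_assoc]
    congr 3
    field_simp
  exact absurd hpos (not_lt.2 hle)

/-- Proposition 6.1: finite energy plus a spectral gap imply an interval of
distances.  If `C₀ ≥ 1`, `0 < α ≤ 1/8 < 1 < N`, `a, b, δ ∈ (0,1/4)` satisfy
`Nα > (d-1)/2`, `2b ≤ δ`, `a < b ≤ c_d`, `C₀ b^{Nα-(d-1)/2} < c_d`, then any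
probability measure `μ` on `[0,1]^d` with `I_μ((d+1)/2 + α) ≤ C₀` and
`F_μ(a^{-N}) - F_μ(δ/b) ≤ a` satisfies `∫ |μ̂(ξ)|² σ̂(tξ) dξ ≥ c_d > 0` for all
`t ∈ [a,b]`; in particular `Δ(supp μ) ⊇ [a,b]`. -/
theorem statement19 (d : ℕ) (hd : 2 ≤ d)
    (C₀ α N a b δ : ℝ) (hC₀ : 1 ≤ C₀)
    (hα0 : 0 < α) (hα : α ≤ 1/8) (hN : 1 < N)
    (ha : a ∈ Ioo (0:ℝ) (1/4)) (hb : b ∈ Ioo (0:ℝ) (1/4)) (hδ : δ ∈ Ioo (0:ℝ) (1/4))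
    (hNα : ((d : ℝ) - 1) / 2 < N * α) (hbδ : 2 * b ≤ δ)
    (hab : a < b) (hbcd : b ≤ cdConst d)
    (hC₀b : C₀ * b ^ (N * α - ((d : ℝ) - 1) / 2) < cdConst d)
    (μ : Measure (Euc d)) (hμ : IsProbabilityMeasure μ)
    (hsupp : μ (unitCube d)ᶜ = 0)
    (hen : energy μ (((d : ℝ) + 1) / 2 + α) ≤ ENNReal.ofReal C₀)
    (hgap : FmuInt μ (a ^ (-N)) - FmuInt μ (δ / b) ≤ a) :
    0 < cdConst d ∧
    (∀ t ∈ Icc a b,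
      cdConst d ≤ ∫ ξ : Euc d, ‖fourierM μ ξ‖ ^ 2 * (sphereFT d (t • ξ)).re) ∧
    Icc a b ⊆ distSet (msupport μ) (msupport μ) := by
  have hm := fun t (ht : t ∈ Icc a b) => main_ineq d hd C₀ α N a b δ hC₀ hα0 hα hN ha hb hδ hNα hbδ hab
    hbcd hC₀b μ hsupp hen hgap t ht
  refine ⟨cdConst_pos d hd, fun t ht => (hm t ht).2, fun t ht => ?_⟩
  exact dist_concl d hd μ hsupp t (lt_of_lt_of_le ha.1 ht.1) (hm t ht).1
    (lt_of_lt_of_le (cdConst_pos d hd) (hm t ht).2)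
end
end
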